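/- arXiv:1709.09924 — 6 statements merged into one kernel-verified Lean document; each statement's English description precedes it below -/
import Mathlib

section
/- Let L > 0 with L ∉ 𝒩. If λ ∈ ℂ and θ, u : [0,L] → ℂ are three times continuously differentiable and satisfy −u′(x) − u‴(x) = λ·θ(x) and −θ′(x) − θ‴(x) = λ·u(x) for all x ∈ [0,L], together with the boundary conditions θ(0) = θ(L) = θ′(0) = θ′(L) = 0 and u(0) = u(L) = u′(L) = 0, then θ and u vanish identically on [0,L]. -/
open Set

/-- The set 𝒩 = { (2π/√3)·√(k² + k·l + l²) : k, l positive integers } of critical lengths. -/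
def criticalN : Set ℝ :=
  {x | ∃ k l : ℕ, 0 < k ∧ 0 < l ∧
    x = (2 * Real.pi / Real.sqrt 3) * Real.sqrt ((k : ℝ)^2 + (k : ℝ) * (l : ℝ) + (l : ℝ)^2)}

/-- First integral attached to a root of the characteristic polynomial. -/
lemma aux_F (L : ℝ) (lam r : ℂ) (v v1 v2 v3 : ℝ → ℂ)
    (h0 : ∀ x, HasDerivAt v (v1 x) x) (h1 : ∀ x, HasDerivAt v1 (v2 x) x)
    (h2 : ∀ x, HasDerivAt v2 (v3 x) x)
    (heq : ∀ x ∈ Icc (0 : ℝ) L, v3 x + v1 x = - lam * v x)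
    (hr : r ^ 3 + r + lam = 0) (hv0 : v 0 = 0) (hv'0 : v1 0 = 0) :
    ∀ x ∈ Icc (0 : ℝ) L,
      Complex.exp (-r * x) * (v2 x + r * v1 x + (r ^ 2 + 1) * v x) = v2 0 := by
  have hd : ∀ x : ℝ, HasDerivAt
      (fun x : ℝ => Complex.exp (-r * x) * (v2 x + r * v1 x + (r ^ 2 + 1) * v x))
      ((Complex.exp (-r * x) * (-r * 1)) * (v2 x + r * v1 x + (r ^ 2 + 1) * v x) +
        Complex.exp (-r * x) * (v3 x + r * v2 x + (r ^ 2 + 1) * v1 x)) x := fun x =>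
    (((Complex.ofRealCLM.hasDerivAt (x := x)).const_mul (-r)).cexp).mul
      (((h2 x).add ((h1 x).const_mul r)).add ((h0 x).const_mul (r ^ 2 + 1)))
  intro x hx
  have := constant_of_has_deriv_right_zero
    (fun y _ => (hd y).continuousAt.continuousWithinAt)
    (fun y hy => by
      have h := (hd y).hasDerivWithinAt (s := Ici y)
      convert h using 1
      have e := heq y (Ico_subset_Icc_self hy)
      linear_combination (-Complex.exp (-r * y)) * e + Complex.exp (-r * y) * v y * hr) x hx
  simpa [hv0, hv'0] using this

/-- Second first integral, for a double root. -/
lemma aux_H (L : ℝ) (lam r : ℂ) (v v1 v2 v3 : ℝ → ℂ)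
    (h0 : ∀ x, HasDerivAt v (v1 x) x) (h1 : ∀ x, HasDerivAt v1 (v2 x) x)
    (h2 : ∀ x, HasDerivAt v2 (v3 x) x)
    (heq : ∀ x ∈ Icc (0 : ℝ) L, v3 x + v1 x = - lam * v x)
    (hr : r ^ 3 + r + lam = 0) (hr2 : 3 * r ^ 2 + 1 = 0) (hv0 : v 0 = 0) (hv'0 : v1 0 = 0) :
    ∀ x ∈ Icc (0 : ℝ) L,
      Complex.exp (-r * x) * (-(x : ℂ) * (v2 x + r * v1 x + (r ^ 2 + 1) * v x)
        + (v1 x + 2 * r * v x)) = 0 := by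
  have hd : ∀ x : ℝ, HasDerivAt
      (fun x : ℝ => Complex.exp (-r * x) * (-(x : ℂ) * (v2 x + r * v1 x + (r ^ 2 + 1) * v x)
        + (v1 x + 2 * r * v x)))
      ((Complex.exp (-r * x) * (-r * 1)) * (-(x : ℂ) * (v2 x + r * v1 x + (r ^ 2 + 1) * v x)
        + (v1 x + 2 * r * v x)) +
        Complex.exp (-r * x) * ((-1 * (v2 x + r * v1 x + (r ^ 2 + 1) * v x)
          + -(x : ℂ) * (v3 x + r * v2 x + (r ^ 2 + 1) * v1 x)) + (v2 x + 2 * r * v1 x))) x :=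
    fun x =>
    (((Complex.ofRealCLM.hasDerivAt (x := x)).const_mul (-r)).cexp).mul
      (((Complex.ofRealCLM.hasDerivAt (x := x)).neg.mul
        (((h2 x).add ((h1 x).const_mul r)).add ((h0 x).const_mul (r ^ 2 + 1)))).add
        ((h1 x).add ((h0 x).const_mul (2 * r))))
  intro x hx
  have := constant_of_has_deriv_right_zero
    (fun y _ => (hd y).continuousAt.continuousWithinAt)
    (fun y hy => by
      have h := (hd y).hasDerivWithinAt (s := Ici y)
      convert h using 1
      have e := heq y (Ico_subset_Icc_self hy)
      linear_combination (Complex.exp (-r * y)) * y * e - Complex.exp (-r * y) * y * v y * hr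
        + Complex.exp (-r * y) * v y * hr2) x hx
  simpa [hv0, hv'0] using this

lemma aux_roots (lam : ℂ) : ∃ r s t : ℂ, r ^ 3 + r + lam = 0 ∧ s ^ 3 + s + lam = 0 ∧
    t ^ 3 + t + lam = 0 ∧ r + s + t = 0 ∧ r * s + s * t + r * t = 1 := by
  obtain ⟨r, hr⟩ : ∃ r : ℂ, r ^ 3 + r + lam = 0 := by
    have hdeg : (Polynomial.X ^ 3 + Polynomial.X + Polynomial.C lam : Polynomial ℂ).degree = 3 := by
      compute_degree!
    obtain ⟨r, hr⟩ := IsAlgClosed.exists_root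
      (Polynomial.X ^ 3 + Polynomial.X + Polynomial.C lam : Polynomial ℂ) (by rw [hdeg]; norm_num)
    exact ⟨r, by simpa [Polynomial.IsRoot] using hr⟩
  obtain ⟨d, hd⟩ := IsAlgClosed.exists_pow_nat_eq (-3 * r ^ 2 - 4) (n := 2) (by norm_num)
  refine ⟨r, (-r + d) / 2, (-r - d) / 2, hr, ?_, ?_, by ring, ?_⟩
  · linear_combination hr + (-3 * r + d) / 8 * hd
  · linear_combination hr + (-3 * r - d) / 8 * hd
  · linear_combination (-1 / 4) * hd

lemma aux_crit (L : ℝ) (hL : 0 < L) (a b : ℤ) (ha : a ≠ 0) (hb : b ≠ 0) (hab : a + b ≠ 0)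
    (h : 3 * L ^ 2 = 4 * Real.pi ^ 2 * ((a : ℝ) ^ 2 + a * b + b ^ 2)) : L ∈ criticalN := by
  obtain ⟨k, l, hk, hl, hkl⟩ : ∃ k l : ℕ, 0 < k ∧ 0 < l ∧
      (k : ℤ) ^ 2 + k * l + l ^ 2 = a ^ 2 + a * b + b ^ 2 := by
    have key : ∀ p q : ℤ, 0 < p → 0 < q → p ^ 2 + p * q + q ^ 2 = a ^ 2 + a * b + b ^ 2 →
        ∃ k l : ℕ, 0 < k ∧ 0 < l ∧ (k : ℤ) ^ 2 + k * l + l ^ 2 = a ^ 2 + a * b + b ^ 2 := by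
      intro p q hp hq h
      lift p to ℕ using hp.le
      lift q to ℕ using hq.le
      exact ⟨p, q, by exact_mod_cast hp, by exact_mod_cast hq, h⟩
    rcases lt_or_gt_of_ne ha with h1 | h1 <;> rcases lt_or_gt_of_ne hb with h2 | h2 <;>
      rcases lt_or_gt_of_ne hab with h3 | h3
    · exact key (-a) (-b) (by lia) (by lia) (by ring)
    · lia
    · exact key b (-(a + b)) (by lia) (by lia) (by ring)
    · exact key (-a) (a + b) (by lia) (by lia) (by ring)
    · exact key a (-(a + b)) (by lia) (by lia) (by ring)
    · exact key (-b) (a + b) (by lia) (by lia) (by ring)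
    · lia
    · exact key a b (by lia) (by lia) (by ring)
  refine ⟨k, l, hk, hl, ?_⟩
  have hkl' : (k : ℝ) ^ 2 + k * l + l ^ 2 = (a : ℝ) ^ 2 + a * b + b ^ 2 := by exact_mod_cast hkl
  rw [← hkl'] at h
  have h3 : (0 : ℝ) < Real.sqrt 3 := by positivity
  refine (pow_left_inj₀ hL.le (by positivity) (two_ne_zero)).1 ?_
  rw [mul_pow, div_pow, Real.sq_sqrt (by positivity), Real.sq_sqrt (by positivity)]
  linarith

/-- Rosier's lemma. -/
lemma aux_rosier (L : ℝ) (hL : 0 < L) (hLN : L ∉ criticalN) (lam : ℂ) (v v1 v2 v3 : ℝ → ℂ)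
    (h0 : ∀ x, HasDerivAt v (v1 x) x) (h1 : ∀ x, HasDerivAt v1 (v2 x) x)
    (h2 : ∀ x, HasDerivAt v2 (v3 x) x)
    (heq : ∀ x ∈ Icc (0 : ℝ) L, v3 x + v1 x = - lam * v x)
    (hv0 : v 0 = 0) (hv'0 : v1 0 = 0) (hvL : v L = 0) (hv'L : v1 L = 0) :
    ∀ x ∈ Icc (0 : ℝ) L, v x = 0 := by
  have hLm : L ∈ Icc (0 : ℝ) L := ⟨hL.le, le_rfl⟩
  have hLc : (L : ℂ) ≠ 0 := by exact_mod_cast hL.ne'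
  -- the double root case
  have hdouble : ∀ r : ℂ, r ^ 3 + r + lam = 0 → 3 * r ^ 2 + 1 = 0 →
      ∀ x ∈ Icc (0 : ℝ) L, v x = 0 := by
    intro r hr hr2
    have hr0 : r ≠ 0 := by
      rintro rfl
      norm_num at hr2
    have hF := aux_F L lam r v v1 v2 v3 h0 h1 h2 heq hr hv0 hv'0
    have hH := aux_H L lam r v v1 v2 v3 h0 h1 h2 heq hr hr2 hv0 hv'0
    have hG := aux_F L lam (-2 * r) v v1 v2 v3 h0 h1 h2 heq
      (by linear_combination hr - 3 * r * hr2) hv0 hv'0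
    have hvL2 : v2 L = 0 := by
      have := hH L hLm
      simpa [hvL, hv'L, hLc] using this
    have hv02 : v2 0 = 0 := by
      have := hF L hLm
      simpa [hvL, hv'L, hvL2] using this.symm
    intro x hx
    have e1 := hF x hx
    have e2 := hG x hx
    have e3 := hH x hx
    rw [hv02] at e1 e2
    have e1 := (mul_eq_zero.1 e1).resolve_left (Complex.exp_ne_zero _)
    have e2 := (mul_eq_zero.1 e2).resolve_left (Complex.exp_ne_zero _)
    have e3 := (mul_eq_zero.1 e3).resolve_left (Complex.exp_ne_zero _)
    rw [e1] at e3
    have : r ^ 2 * v x = 0 := by linear_combination r / 3 * e3 - (e1 - e2) / 9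
    exact (mul_eq_zero.1 this).resolve_left (pow_ne_zero _ hr0)
  obtain ⟨r, s, t, hr, hs, ht, hsum, hprod⟩ := aux_roots lam
  by_cases hrs : r = s
  · subst hrs
    exact hdouble r hr (by linear_combination 2 * r * hsum - hprod)
  by_cases hst : s = t
  · subst hst
    exact hdouble s hs (by linear_combination 2 * s * hsum - hprod)
  by_cases hrt : r = t
  · subst hrt
    exact hdouble r hr (by linear_combination 2 * r * hsum - hprod)
  have hFr := aux_F L lam r v v1 v2 v3 h0 h1 h2 heq hr hv0 hv'0
  have hFs := aux_F L lam s v v1 v2 v3 h0 h1 h2 heq hs hv0 hv'0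
  have hFt := aux_F L lam t v v1 v2 v3 h0 h1 h2 heq ht hv0 hv'0
  have er := hFr L hLm
  have es := hFs L hLm
  have et := hFt L hLm
  simp only [hvL, hv'L, mul_zero, add_zero] at er es et
  by_cases hvL2 : v2 L = 0
  · have hv02 : v2 0 = 0 := by rw [← er, hvL2, mul_zero]
    intro x hx
    have e1 := hFr x hx
    have e2 := hFs x hx
    have e3 := hFt x hx
    rw [hv02] at e1 e2 e3
    have e1 := (mul_eq_zero.1 e1).resolve_left (Complex.exp_ne_zero _)
    have e2 := (mul_eq_zero.1 e2).resolve_left (Complex.exp_ne_zero _)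
    have e3 := (mul_eq_zero.1 e3).resolve_left (Complex.exp_ne_zero _)
    have f1 : (r - s) * (v1 x + (r + s) * v x) = 0 := by linear_combination e1 - e2
    have f2 : (s - t) * (v1 x + (s + t) * v x) = 0 := by linear_combination e2 - e3
    have f1 := (mul_eq_zero.1 f1).resolve_left (sub_ne_zero.2 hrs)
    have f2 := (mul_eq_zero.1 f2).resolve_left (sub_ne_zero.2 hst)
    have f3 : (r - t) * v x = 0 := by linear_combination f1 - f2
    exact (mul_eq_zero.1 f3).resolve_left (sub_ne_zero.2 hrt)
  · exfalso
    have g1 := mul_right_cancel₀ hvL2 (er.trans es.symm)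
    have g2 := mul_right_cancel₀ hvL2 (es.trans et.symm)
    obtain ⟨a, ha⟩ := Complex.exp_eq_exp_iff_exists_int.1 g1
    obtain ⟨b, hb⟩ := Complex.exp_eq_exp_iff_exists_int.1 g2
    apply hLN
    refine aux_crit L hL a b ?_ ?_ ?_ ?_
    · rintro rfl
      apply hrs
      apply mul_right_cancel₀ hLc
      push_cast at ha
      linear_combination -ha
    · rintro rfl
      apply hst
      apply mul_right_cancel₀ hLc
      push_cast at hb
      linear_combination -hb
    · intro hab
      apply hrt
      apply mul_right_cancel₀ hLc
      have hab' : (a : ℂ) + b = 0 := by exact_mod_cast hab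
      linear_combination -ha - hb - (2 * Real.pi * Complex.I) * hab'
    · have hid : (r - s) ^ 2 + (r - s) * (s - t) + (s - t) ^ 2 = -3 := by
        linear_combination (r + s + t) * hsum - 3 * hprod
      have ha' : (r - s) * L = -(a * (2 * Real.pi * Complex.I)) := by linear_combination -ha
      have hb' : (s - t) * L = -(b * (2 * Real.pi * Complex.I)) := by linear_combination -hb
      have : (3 * L ^ 2 : ℂ) = 4 * Real.pi ^ 2 * ((a : ℂ) ^ 2 + a * b + b ^ 2) := by
        have hc : -(3 * L ^ 2 : ℂ) = ((r - s) * L) ^ 2 + ((r - s) * L) * ((s - t) * L)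
            + ((s - t) * L) ^ 2 := by linear_combination (-L ^ 2 : ℂ) * hid
        rw [ha', hb'] at hc
        linear_combination -hc - (4 * Real.pi ^ 2 * ((a : ℂ) ^ 2 + a * b + b ^ 2)) * Complex.I_sq
      exact_mod_cast this

/-- The energy density. -/
noncomputable def auxE (v v1 v2 : ℝ → ℂ) (x : ℝ) : ℝ :=
  ((v2 x).re * (v x).re + (v2 x).im * (v x).im)
    - ((v1 x).re * (v1 x).re + (v1 x).im * (v1 x).im) / 2
    + ((v x).re * (v x).re + (v x).im * (v x).im) / 2

lemma auxE_deriv (L : ℝ) (lam : ℂ) (v v1 v2 v3 : ℝ → ℂ)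
    (h0 : ∀ x, HasDerivAt v (v1 x) x) (h1 : ∀ x, HasDerivAt v1 (v2 x) x)
    (h2 : ∀ x, HasDerivAt v2 (v3 x) x)
    (heq : ∀ x ∈ Icc (0 : ℝ) L, v3 x + v1 x = - lam * v x) (x : ℝ) (hx : x ∈ Icc (0 : ℝ) L) :
    HasDerivAt (auxE v v1 v2) (- lam.re * Complex.normSq (v x)) x := by
  have hre : ∀ {f : ℝ → ℂ} {f' : ℂ}, HasDerivAt f f' x →
      HasDerivAt (fun y => (f y).re) f'.re x := fun h =>
    Complex.reCLM.hasFDerivAt.comp_hasDerivAt x h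
  have him : ∀ {f : ℝ → ℂ} {f' : ℂ}, HasDerivAt f f' x →
      HasDerivAt (fun y => (f y).im) f'.im x := fun h =>
    Complex.imCLM.hasFDerivAt.comp_hasDerivAt x h
  have A0 := hre (h0 x)
  have B0 := him (h0 x)
  have A1 := hre (h1 x)
  have B1 := him (h1 x)
  have A2 := hre (h2 x)
  have B2 := him (h2 x)
  have := (((A2.mul A0).add (B2.mul B0)).sub (((A1.mul A1).add (B1.mul B1)).div_const 2)).add
    (((A0.mul A0).add (B0.mul B0)).div_const 2)
  refine HasDerivAt.congr_deriv (f := auxE v v1 v2) this ?_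
  have e := heq x hx
  have er := congrArg Complex.re e
  have ei := congrArg Complex.im e
  simp at er ei
  rw [Complex.normSq_apply]
  linear_combination (v x).re * er + (v x).im * ei

/-- If `L ∉ 𝒩`, the spectral problem for the linearized Boussinesq system with boundary
conditions `θ(0) = θ(L) = θ′(0) = θ′(L) = 0`, `u(0) = u(L) = u′(L) = 0` has only the trivial
solution. -/
theorem statement_0 (L : ℝ) (hL : 0 < L) (hLN : L ∉ criticalN)
    (lam : ℂ) (θ u : ℝ → ℂ)
    (hθreg : ContDiff ℝ 3 θ) (hureg : ContDiff ℝ 3 u)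
    (heq1 : ∀ x ∈ Icc (0 : ℝ) L, -deriv u x - deriv (deriv (deriv u)) x = lam * θ x)
    (heq2 : ∀ x ∈ Icc (0 : ℝ) L, -deriv θ x - deriv (deriv (deriv θ)) x = lam * u x)
    (hθ0 : θ 0 = 0) (hθL : θ L = 0) (hθ'0 : deriv θ 0 = 0) (hθ'L : deriv θ L = 0)
    (hu0 : u 0 = 0) (huL : u L = 0) (hu'L : deriv u L = 0) :
    ∀ x ∈ Icc (0 : ℝ) L, θ x = 0 ∧ u x = 0 := by
  have D : ∀ f : ℝ → ℂ, ContDiff ℝ 3 f → (∀ x, HasDerivAt f (deriv f x) x) ∧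
      (∀ x, HasDerivAt (deriv f) (deriv (deriv f) x) x) ∧
      (∀ x, HasDerivAt (deriv (deriv f)) (deriv (deriv (deriv f)) x) x) := by
    intro f hf
    have c1 : ContDiff ℝ 2 (deriv f) := by
      have : ContDiff ℝ (2 + 1) f := by convert hf using 1; norm_num
      exact (contDiff_succ_iff_deriv.1 this).2.2
    have c2 : ContDiff ℝ 1 (deriv (deriv f)) := by
      have : ContDiff ℝ (1 + 1) (deriv f) := by convert c1 using 1; norm_num
      exact (contDiff_succ_iff_deriv.1 this).2.2
    exact ⟨fun x => (hf.differentiable (by norm_num) x).hasDerivAt,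
      fun x => (c1.differentiable (by norm_num) x).hasDerivAt,
      fun x => (c2.differentiable (by norm_num) x).hasDerivAt⟩
  obtain ⟨t0, t1, t2⟩ := D θ hθreg
  obtain ⟨u0, u1, u2⟩ := D u hureg
  have p0 := fun x => (t0 x).add (u0 x)
  have p1 := fun x => (t1 x).add (u1 x)
  have p2 := fun x => (t2 x).add (u2 x)
  have m0 := fun x => (t0 x).sub (u0 x)
  have m1 := fun x => (t1 x).sub (u1 x)
  have m2 := fun x => (t2 x).sub (u2 x)
  have hp : ∀ x ∈ Icc (0 : ℝ) L, (deriv (deriv (deriv θ)) + deriv (deriv (deriv u))) x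
      + (deriv θ + deriv u) x = - lam * (θ + u) x := by
    intro x hx
    simp only [Pi.add_apply]
    linear_combination - heq1 x hx - heq2 x hx
  have hm : ∀ x ∈ Icc (0 : ℝ) L, (deriv (deriv (deriv θ)) - deriv (deriv (deriv u))) x
      + (deriv θ - deriv u) x = - (-lam) * (θ - u) x := by
    intro x hx
    simp only [Pi.sub_apply]
    linear_combination heq1 x hx - heq2 x hx
  have Ep := auxE_deriv L lam (θ + u) (deriv θ + deriv u) (deriv (deriv θ) + deriv (deriv u))
    (deriv (deriv (deriv θ)) + deriv (deriv (deriv u))) p0 p1 p2 hp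
  have Em := auxE_deriv L (-lam) (θ - u) (deriv θ - deriv u) (deriv (deriv θ) - deriv (deriv u))
    (deriv (deriv (deriv θ)) - deriv (deriv (deriv u))) m0 m1 m2 hm
  have h0m : (0 : ℝ) ∈ Icc (0 : ℝ) L := ⟨le_rfl, hL.le⟩
  have hLm : L ∈ Icc (0 : ℝ) L := ⟨hL.le, le_rfl⟩
  by_cases hre : lam.re = 0
  · -- conservative case: the extra boundary value vanishes
    have hc := constant_of_has_deriv_right_zero
      (fun y hy => (Ep y hy).continuousAt.continuousWithinAt)
      (fun y hy => by
        have h := (Ep y (Ico_subset_Icc_self hy)).hasDerivWithinAt (s := Ici y)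
        simpa [hre] using h) L hLm
    have hu'0 : deriv u 0 = 0 := by
      simp [auxE, hθ0, hθL, hθ'0, hθ'L, hu0, huL, hu'L] at hc
      apply Complex.ext
      · simp only [Complex.zero_re]
        nlinarith [mul_self_nonneg (deriv u 0).re, mul_self_nonneg (deriv u 0).im]
      · simp only [Complex.zero_im]
        nlinarith [mul_self_nonneg (deriv u 0).re, mul_self_nonneg (deriv u 0).im]
    have R1 := aux_rosier L hL hLN lam _ _ _ _ p0 p1 p2 hp (by simp [hθ0, hu0])
      (by simp [hθ'0, hu'0]) (by simp [hθL, huL]) (by simp [hθ'L, hu'L])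
    have R2 := aux_rosier L hL hLN (-lam) _ _ _ _ m0 m1 m2 hm (by simp [hθ0, hu0])
      (by simp [hθ'0, hu'0]) (by simp [hθL, huL]) (by simp [hθ'L, hu'L])
    intro x hx
    have a := R1 x hx
    have b := R2 x hx
    simp only [Pi.add_apply, Pi.sub_apply] at a b
    exact ⟨by linear_combination (a + b) / 2, by linear_combination (a - b) / 2⟩
  · -- dissipative case
    set G : ℝ → ℝ := fun x => lam.re *
      (auxE (θ - u) (deriv θ - deriv u) (deriv (deriv θ) - deriv (deriv u)) x
        - auxE (θ + u) (deriv θ + deriv u) (deriv (deriv θ) + deriv (deriv u)) x) with hG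
    have hGd : ∀ x ∈ Icc (0 : ℝ) L, HasDerivAt G (lam.re ^ 2 *
        (Complex.normSq ((θ - u) x) + Complex.normSq ((θ + u) x))) x := by
      intro x hx
      refine HasDerivAt.congr_deriv (((Em x hx).sub (Ep x hx)).const_mul lam.re) ?_
      simp only [Complex.neg_re]
      ring
    have hmono : MonotoneOn G (Icc 0 L) := by
      refine monotoneOn_of_deriv_nonneg (convex_Icc 0 L)
        (fun y hy => (hGd y hy).continuousAt.continuousWithinAt)
        (fun y hy => (hGd y (interior_subset hy)).differentiableAt.differentiableWithinAt)
        (fun y hy => ?_)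
      rw [(hGd y (interior_subset hy)).deriv]
      exact mul_nonneg (sq_nonneg _) (add_nonneg (Complex.normSq_nonneg _) (Complex.normSq_nonneg _))
    have hG0 : G 0 = 0 := by
      simp [hG, auxE, hθ0, hθ'0, hu0]
    have hGL : G L = 0 := by
      simp [hG, auxE, hθL, hθ'L, huL, hu'L]
    have hGz : ∀ x ∈ Icc (0 : ℝ) L, G x = 0 := fun x hx =>
      le_antisymm (hGL ▸ hmono hx hLm hx.2) (hG0 ▸ hmono h0m hx hx.1)
    intro x hx
    rcases eq_or_lt_of_le hx.1 with h | hx0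
    · subst h; exact ⟨hθ0, hu0⟩
    rcases eq_or_lt_of_le hx.2 with h | hxL
    · subst h; exact ⟨hθL, huL⟩
    have hloc : G =ᶠ[nhds x] fun _ => 0 := by
      filter_upwards [Icc_mem_nhds hx0 hxL] with y hy using hGz y hy
    have hz := (hGd x hx).unique ((hasDerivAt_const x (0 : ℝ)).congr_of_eventuallyEq hloc)
    have hz := (mul_eq_zero.1 hz).resolve_left (pow_ne_zero _ hre)
    have n1 := Complex.normSq_nonneg ((θ - u) x)
    have n2 := Complex.normSq_nonneg ((θ + u) x)
    have b := Complex.normSq_eq_zero.1 (le_antisymm (by linarith) n1)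
    have a := Complex.normSq_eq_zero.1 (le_antisymm (by linarith) n2)
    simp only [Pi.add_apply, Pi.sub_apply] at a b
    exact ⟨by linear_combination (a + b) / 2, by linear_combination (a - b) / 2⟩
end

section
/- Let L ∈ 𝒩. Then there exist λ ∈ ℂ and three times continuously differentiable functions θ, u : [0,L] → ℂ, not both identically zero, satisfying −u′(x) − u‴(x) = λ·θ(x) and −θ′(x) − θ‴(x) = λ·u(x) for all x ∈ [0,L], the boundary conditions θ(0) = θ(L) = θ′(0) = θ′(L) = 0 and u(0) = u(L) = u′(L) = 0, and additionally u″(L) = 0. -/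
set_option linter.unusedSimpArgs false
open Set

/-- Exponential sums. -/
noncomputable def expSum (A m : Fin 6 → ℂ) : ℝ → ℂ :=
  fun x => ∑ j, A j * Complex.exp (m j * (x : ℂ))

theorem expSum_contDiff (A m : Fin 6 → ℂ) : ContDiff ℝ 3 (expSum A m) := by
  unfold expSum
  refine ContDiff.sum fun j _ => contDiff_const.mul ?_
  exact (contDiff_const.mul Complex.ofRealCLM.contDiff).cexp

theorem expSum_deriv (A m : Fin 6 → ℂ) :
    deriv (expSum A m) = expSum (fun j => A j * m j) m := by
  funext x
  have h : HasDerivAt (expSum A m) (∑ j, A j * (Complex.exp (m j * (x : ℂ)) * (m j * 1))) x := by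
    unfold expSum
    refine HasDerivAt.fun_sum fun j _ => ?_
    have h1 : HasDerivAt (fun y : ℝ => m j * (y : ℂ)) (m j * 1) x :=
      (Complex.ofRealCLM.hasDerivAt).const_mul (m j)
    exact (h1.cexp).const_mul (A j)
  rw [h.deriv]
  unfold expSum
  refine Finset.sum_congr rfl fun j _ => ?_
  ring

theorem core (L : ℝ) (hL : 0 < L) (p q r c d : ℂ) (hsum : p + q + r = 0)
    (he : p * q + q * r + r * p = 1) (hpr : r ≠ p) (hqr : r ≠ q) (hpq : p ≠ q) (hcd : c * d = 1)
    (hp : Complex.exp (p * L) = c) (hq : Complex.exp (q * L) = c) (hr : Complex.exp (r * L) = c) :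
    ∃ (lam : ℂ) (θ u : ℝ → ℂ),
      ContDiff ℝ 3 θ ∧ ContDiff ℝ 3 u ∧
      ¬(∀ x ∈ Icc (0 : ℝ) L, θ x = 0 ∧ u x = 0) ∧
      (∀ x ∈ Icc (0 : ℝ) L, -deriv u x - deriv (deriv (deriv u)) x = lam * θ x) ∧
      (∀ x ∈ Icc (0 : ℝ) L, -deriv θ x - deriv (deriv (deriv θ)) x = lam * u x) ∧
      θ 0 = 0 ∧ θ L = 0 ∧ deriv θ 0 = 0 ∧ deriv θ L = 0 ∧
      u 0 = 0 ∧ u L = 0 ∧ deriv u L = 0 ∧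
      deriv (deriv u) L = 0 := by
  have hc : c ≠ 0 := left_ne_zero_of_mul_eq_one hcd
  have hd : c⁻¹ = d := inv_eq_of_mul_eq_one_right hcd
  have hp' : Complex.exp (-p * L) = d := by rw [neg_mul, Complex.exp_neg, hp, hd]
  have hq' : Complex.exp (-q * L) = d := by rw [neg_mul, Complex.exp_neg, hq, hd]
  have hr' : Complex.exp (-r * L) = d := by rw [neg_mul, Complex.exp_neg, hr, hd]
  have cp : p ^ 3 + p = p * q * r := by linear_combination p ^ 2 * hsum - p * he
  have cq : q ^ 3 + q = p * q * r := by linear_combination q ^ 2 * hsum - q * he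
  have cr : r ^ 3 + r = p * q * r := by linear_combination r ^ 2 * hsum - r * he
  set m : Fin 6 → ℂ := ![p, q, r, -p, -q, -r] with hm
  set A : Fin 6 → ℂ := ![q - r, r - p, p - q, c^2 * (q - r), c^2 * (r - p), c^2 * (p - q)] with hA
  set B : Fin 6 → ℂ :=
    ![q - r, r - p, p - q, -c^2 * (q - r), -c^2 * (r - p), -c^2 * (p - q)] with hB
  refine ⟨-(p * q * r), expSum A m, expSum B m, expSum_contDiff _ _, expSum_contDiff _ _,
    ?_, ?_, ?_, ?_, ?_, ?_, ?_, ?_, ?_, ?_, ?_⟩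
  · intro h
    set C : Fin 6 → ℂ := ![q - r, r - p, p - q, 0, 0, 0] with hC
    have h0 : ∀ x ∈ Ioo (0 : ℝ) L, expSum C m x = 0 := by
      intro x hx
      obtain ⟨h1, h2⟩ := h x ⟨hx.1.le, hx.2.le⟩
      simp only [expSum, hA, hB, hC, hm, Fin.sum_univ_six] at h1 h2 ⊢
      simp at h1 h2 ⊢
      linear_combination (h1 + h2) / 2
    have step : ∀ D : Fin 6 → ℂ, (∀ x ∈ Ioo (0 : ℝ) L, expSum D m x = 0) →
        ∀ x ∈ Ioo (0 : ℝ) L, expSum (fun j => D j * m j) m x = 0 := by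
      intro D hD x hx
      rw [← expSum_deriv]
      have : expSum D m =ᶠ[nhds x] fun _ => (0 : ℂ) := by
        filter_upwards [Ioo_mem_nhds hx.1 hx.2] with y hy using hD y hy
      rw [this.deriv_eq]
      simp
    have hx : L / 2 ∈ Ioo (0 : ℝ) L := ⟨by linarith, by linarith⟩
    have e0 := h0 _ hx
    have e1 := step _ h0 _ hx
    have e2 := step _ (step _ h0) _ hx
    simp only [expSum, hC, hm, Fin.sum_univ_six] at e0 e1 e2
    simp at e0 e1 e2
    have key : (p - q) * ((r - p) * (r - q)) * Complex.exp (r * (L / 2)) = 0 := by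
      linear_combination e2 - (p + q) * e1 + p * q * e0
    exact mul_ne_zero (mul_ne_zero (sub_ne_zero.2 hpq)
      (mul_ne_zero (sub_ne_zero.2 hpr) (sub_ne_zero.2 hqr))) (Complex.exp_ne_zero _) key
  · intro x _
    simp only [expSum_deriv]
    simp only [expSum, hA, hB, hm, Fin.sum_univ_six]
    simp
    generalize Complex.exp (p * x) = E1
    generalize Complex.exp (q * x) = E2
    generalize Complex.exp (r * x) = E3
    generalize Complex.exp (-(p * x)) = E4
    generalize Complex.exp (-(q * x)) = E5
    generalize Complex.exp (-(r * x)) = E6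
    linear_combination (-(q - r) * (E1 + c^2 * E4)) * cp - ((r - p) * (E2 + c^2 * E5)) * cq
      - ((p - q) * (E3 + c^2 * E6)) * cr
  · intro x _
    simp only [expSum_deriv]
    simp only [expSum, hA, hB, hm, Fin.sum_univ_six]
    simp
    generalize Complex.exp (p * x) = E1
    generalize Complex.exp (q * x) = E2
    generalize Complex.exp (r * x) = E3
    generalize Complex.exp (-(p * x)) = E4
    generalize Complex.exp (-(q * x)) = E5
    generalize Complex.exp (-(r * x)) = E6
    linear_combination (-(q - r) * (E1 - c^2 * E4)) * cp - ((r - p) * (E2 - c^2 * E5)) * cq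
      - ((p - q) * (E3 - c^2 * E6)) * cr
  · try simp only [expSum_deriv]
    simp only [expSum, hA, hB, hm, Fin.sum_univ_six]
    simp [hp, hq, hr, ← neg_mul, hp', hq', hr', -neg_mul]
    ring
  · try simp only [expSum_deriv]
    simp only [expSum, hA, hB, hm, Fin.sum_univ_six]
    simp [hp, hq, hr, ← neg_mul, hp', hq', hr', -neg_mul]
    ring
  · try simp only [expSum_deriv]
    simp only [expSum, hA, hB, hm, Fin.sum_univ_six]
    simp [hp, hq, hr, ← neg_mul, hp', hq', hr', -neg_mul]
    ring
  · try simp only [expSum_deriv]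
    simp only [expSum, hA, hB, hm, Fin.sum_univ_six]
    simp [hp, hq, hr, ← neg_mul, hp', hq', hr', -neg_mul]
    ring
  · try simp only [expSum_deriv]
    simp only [expSum, hA, hB, hm, Fin.sum_univ_six]
    simp [hp, hq, hr, ← neg_mul, hp', hq', hr', -neg_mul]
    ring
  · try simp only [expSum_deriv]
    simp only [expSum, hA, hB, hm, Fin.sum_univ_six]
    simp [hp, hq, hr, ← neg_mul, hp', hq', hr', -neg_mul]
    ring
  · try simp only [expSum_deriv]
    simp only [expSum, hA, hB, hm, Fin.sum_univ_six]
    simp [hp, hq, hr, ← neg_mul, hp', hq', hr', -neg_mul]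
    ring
  · try simp only [expSum_deriv]
    simp only [expSum, hA, hB, hm, Fin.sum_univ_six]
    simp [hp, hq, hr, ← neg_mul, hp', hq', hr', -neg_mul]
    linear_combination (-c * ((q-r)*p^2+(r-p)*q^2+(p-q)*r^2)) * hcd

/-- If `L ∈ 𝒩`, the spectral problem for the linearized Boussinesq system with boundary
conditions `θ(0) = θ(L) = θ′(0) = θ′(L) = 0`, `u(0) = u(L) = u′(L) = 0` admits a nontrivial
solution satisfying the additional condition `deriv (deriv u) L = 0`. -/
theorem statement_1 (L : ℝ) (hLN : L ∈ criticalN) :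
    ∃ (lam : ℂ) (θ u : ℝ → ℂ),
      ContDiff ℝ 3 θ ∧ ContDiff ℝ 3 u ∧
      ¬(∀ x ∈ Icc (0 : ℝ) L, θ x = 0 ∧ u x = 0) ∧
      (∀ x ∈ Icc (0 : ℝ) L, -deriv u x - deriv (deriv (deriv u)) x = lam * θ x) ∧
      (∀ x ∈ Icc (0 : ℝ) L, -deriv θ x - deriv (deriv (deriv θ)) x = lam * u x) ∧
      θ 0 = 0 ∧ θ L = 0 ∧ deriv θ 0 = 0 ∧ deriv θ L = 0 ∧
      u 0 = 0 ∧ u L = 0 ∧ deriv u L = 0 ∧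
      deriv (deriv u) L = 0 := by
  obtain ⟨k, l, hk, hl, hL⟩ := hLN
  have hk' : (0 : ℝ) < k := by exact_mod_cast hk
  have hl' : (0 : ℝ) < l := by exact_mod_cast hl
  have hN : 0 < (k : ℝ)^2 + (k : ℝ) * (l : ℝ) + (l : ℝ)^2 := by positivity
  have hLpos : 0 < L := by rw [hL]; positivity
  have hL2 : 3 * L ^ 2 = 4 * Real.pi ^ 2 * ((k : ℝ)^2 + (k : ℝ) * (l : ℝ) + (l : ℝ)^2) := by
    rw [hL, mul_pow, div_pow, Real.sq_sqrt hN.le, Real.sq_sqrt (by norm_num)]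
    ring
  have hL2c : 3 * (L : ℂ) ^ 2 =
      4 * (Real.pi : ℂ) ^ 2 * ((k : ℂ)^2 + (k : ℂ) * (l : ℂ) + (l : ℂ)^2) := by
    exact_mod_cast congrArg (fun t : ℝ => (t : ℂ)) hL2
  have hLc : (L : ℂ) ≠ 0 := by exact_mod_cast hLpos.ne'
  have hkc : (k : ℂ) ≠ 0 := by exact_mod_cast hk.ne'
  have hlc : (l : ℂ) ≠ 0 := by exact_mod_cast hl.ne'
  have hklc : (k : ℂ) + l ≠ 0 := by exact_mod_cast (by omega : k + l ≠ 0)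
  have hpi : (Real.pi : ℂ) ≠ 0 := by exact_mod_cast Real.pi_ne_zero
  obtain ⟨s, hs⟩ : ∃ s : ℂ, s = 2 * Real.pi * Complex.I / (3 * L) := ⟨_, rfl⟩
  have hsL : s * (3 * L) = 2 * Real.pi * Complex.I := by rw [hs]; field_simp
  have hs0 : s ≠ 0 := by
    intro h
    rw [h, zero_mul] at hsL
    exact mul_ne_zero (mul_ne_zero two_ne_zero hpi) Complex.I_ne_zero hsL.symm
  have hs2 : 3 * s ^ 2 * ((k : ℂ)^2 + (k : ℂ) * (l : ℂ) + (l : ℂ)^2) = -1 := by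
    have h9 : (s * (3 * L)) ^ 2 = -(4 * (Real.pi : ℂ) ^ 2) := by
      rw [hsL, mul_pow, Complex.I_sq]; ring
    have h3 : (3 * (L : ℂ) ^ 2) ≠ 0 := mul_ne_zero three_ne_zero (pow_ne_zero 2 hLc)
    apply mul_left_cancel₀ h3
    linear_combination ((k : ℂ)^2 + (k : ℂ) * (l : ℂ) + (l : ℂ)^2) * h9 + hL2c
  refine core L hLpos (-(2 * k + l) * s) ((k - l) * s) ((k + 2 * l) * s)
    (Complex.exp (-(2 * k + l) * s * L)) (Complex.exp (-(-(2 * k + l) * s * L)))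
    (by ring) (by linear_combination -hs2) ?_ ?_ ?_ ?_ rfl ?_ ?_
  · intro h
    apply mul_ne_zero (mul_ne_zero three_ne_zero hs0) hklc
    linear_combination h
  · intro h
    apply mul_ne_zero (mul_ne_zero three_ne_zero hs0) hlc
    linear_combination h
  · intro h
    apply mul_ne_zero (mul_ne_zero three_ne_zero hs0) hkc
    linear_combination -h
  · rw [← Complex.exp_add, add_neg_cancel, Complex.exp_zero]
  · rw [Complex.exp_eq_exp_iff_exists_int]
    refine ⟨k, ?_⟩
    push_cast
    linear_combination k * hsL
  · rw [Complex.exp_eq_exp_iff_exists_int]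
    refine ⟨k + l, ?_⟩
    push_cast
    linear_combination (k + l) * hsL
end

section
/- Let L ∈ 𝒩. Then there exist λ ∈ ℂ and three times continuously differentiable functions θ, u : [0,L] → ℂ, not both identically zero, satisfying −u′(x) − u‴(x) = λ·θ(x) and −θ′(x) − θ‴(x) = λ·u(x) for all x ∈ [0,L], the boundary conditions θ(0) = θ(L) = θ′(0) = θ′(L) = 0 and u(0) = u(L) = u′(L) = 0, and additionally θ″(L) = 0. -/
open Set

/-- Combination of six exponentials, with exponents `±p, ±q, ±r`. -/
noncomputable def comb (p q r : ℂ) (a b c aa bb cc : ℂ) (x : ℝ) : ℂ :=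
  a * Complex.exp (p * x) + b * Complex.exp (q * x) + c * Complex.exp (r * x)
  + (aa * Complex.exp (-p * x) + bb * Complex.exp (-q * x) + cc * Complex.exp (-r * x))

lemma hasDerivAt_term (a p : ℂ) (x : ℝ) :
    HasDerivAt (fun x : ℝ => a * Complex.exp (p * x)) (a * p * Complex.exp (p * x)) x := by
  have h1 : HasDerivAt (fun x : ℝ => p * (x : ℂ)) (p * 1) x :=
    (Complex.ofRealCLM.hasDerivAt (x := x)).const_mul p
  have h2 := (h1.cexp).const_mul a
  exact h2.congr_deriv (by ring)

lemma deriv_comb (p q r a b c aa bb cc : ℂ) :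
    deriv (comb p q r a b c aa bb cc) =
      comb p q r (a * p) (b * q) (c * r) (aa * -p) (bb * -q) (cc * -r) := by
  funext x
  exact ((((hasDerivAt_term a p x).add (hasDerivAt_term b q x)).add (hasDerivAt_term c r x)).add
    (((hasDerivAt_term aa (-p) x).add (hasDerivAt_term bb (-q) x)).add
      (hasDerivAt_term cc (-r) x))).deriv

lemma contDiff_comb (p q r a b c aa bb cc : ℂ) :
    ContDiff ℝ 3 (comb p q r a b c aa bb cc) := by
  have h : ∀ a p : ℂ, ContDiff ℝ 3 (fun x : ℝ => a * Complex.exp (p * x)) := fun a p =>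
    contDiff_const.mul ((contDiff_const.mul Complex.ofRealCLM.contDiff).cexp)
  exact (((h a p).add (h b q)).add (h c r)).add (((h aa (-p)).add (h bb (-q))).add (h cc (-r)))

lemma main_aux (L : ℝ) (hL : 0 < L) (p q r ρ lam : ℂ) (hpq : p ≠ q) (hqr : q ≠ r) (hpr : p ≠ r)
    (hp : p ^ 3 + p + lam = 0) (hq : q ^ 3 + q + lam = 0) (hr : r ^ 3 + r + lam = 0)
    (ep : Complex.exp (p * L) = ρ) (eq : Complex.exp (q * L) = ρ)
    (er : Complex.exp (r * L) = ρ) :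
    ∃ (lam : ℂ) (θ u : ℝ → ℂ),
      ContDiff ℝ 3 θ ∧ ContDiff ℝ 3 u ∧
      ¬(∀ x ∈ Icc (0 : ℝ) L, θ x = 0 ∧ u x = 0) ∧
      (∀ x ∈ Icc (0 : ℝ) L, -deriv u x - deriv (deriv (deriv u)) x = lam * θ x) ∧
      (∀ x ∈ Icc (0 : ℝ) L, -deriv θ x - deriv (deriv (deriv θ)) x = lam * u x) ∧
      θ 0 = 0 ∧ θ L = 0 ∧ deriv θ 0 = 0 ∧ deriv θ L = 0 ∧
      u 0 = 0 ∧ u L = 0 ∧ deriv u L = 0 ∧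
      deriv (deriv θ) L = 0 := by
  have hρ : ρ ≠ 0 := ep ▸ Complex.exp_ne_zero _
  have ep' : Complex.exp (-p * L) = ρ⁻¹ := by rw [neg_mul, Complex.exp_neg, ep]
  have eq' : Complex.exp (-q * L) = ρ⁻¹ := by rw [neg_mul, Complex.exp_neg, eq]
  have er' : Complex.exp (-r * L) = ρ⁻¹ := by rw [neg_mul, Complex.exp_neg, er]
  refine ⟨lam,
    comb p q r (q - r) (r - p) (p - q) (-ρ^2 * (q - r)) (-ρ^2 * (r - p)) (-ρ^2 * (p - q)),
    comb p q r (q - r) (r - p) (p - q) (ρ^2 * (q - r)) (ρ^2 * (r - p)) (ρ^2 * (p - q)),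
    contDiff_comb _ _ _ _ _ _ _ _ _, contDiff_comb _ _ _ _ _ _ _ _ _, ?_, ?_, ?_, ?_⟩
  · intro h
    have hE : EqOn (comb p q r (q - r) (r - p) (p - q) 0 0 0) (fun _ => 0) (Ioo 0 L) := by
      intro x hx
      obtain ⟨h1, h2⟩ := h x (Ioo_subset_Icc_self hx)
      simp only [comb] at h1 h2 ⊢
      linear_combination (h1 + h2) / 2
    have hE1 := hE.deriv isOpen_Ioo
    have hE2 := hE1.deriv isOpen_Ioo
    have hx : L / 2 ∈ Ioo 0 L := ⟨by linarith, by linarith⟩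
    have k0 := hE hx
    have k1 := hE1 hx
    have k2 := hE2 hx
    simp only [deriv_comb, deriv_const'] at k0 k1 k2
    simp only [comb] at k0 k1 k2
    have : (p - q) * (p - r) * (q - r) * Complex.exp (p * ((L / 2 : ℝ) : ℂ)) = 0 := by
      linear_combination k2 - (q + r) * k1 + q * r * k0
    simp [sub_eq_zero, hpq, hqr, hpr, Complex.exp_ne_zero] at this
  · intro x _
    simp only [deriv_comb]
    simp only [comb]
    linear_combination (-(q - r) * Complex.exp (p * x) + ρ^2 * (q-r) * Complex.exp (-p * x)) * hp
      + (-(r - p) * Complex.exp (q * x) + ρ^2 * (r-p) * Complex.exp (-q * x)) * hq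
      + (-(p - q) * Complex.exp (r * x) + ρ^2 * (p-q) * Complex.exp (-r * x)) * hr
  · intro x _
    simp only [deriv_comb]
    simp only [comb]
    linear_combination (-(q - r) * Complex.exp (p * x) - ρ^2 * (q-r) * Complex.exp (-p * x)) * hp
      + (-(r - p) * Complex.exp (q * x) - ρ^2 * (r-p) * Complex.exp (-q * x)) * hq
      + (-(p - q) * Complex.exp (r * x) - ρ^2 * (p-q) * Complex.exp (-r * x)) * hr
  · simp only [deriv_comb]
    simp only [comb, ep, eq, er, ep', eq', er', Complex.ofReal_zero, mul_zero, Complex.exp_zero]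
    refine ⟨?_, ?_, ?_, ?_, ?_, ?_, ?_, ?_⟩ <;> field_simp <;> ring

/-- If `L ∈ 𝒩`, the spectral problem for the linearized Boussinesq system with boundary
conditions `θ(0) = θ(L) = θ′(0) = θ′(L) = 0`, `u(0) = u(L) = u′(L) = 0` admits a nontrivial
solution satisfying the additional condition `deriv (deriv θ) L = 0`. -/
theorem statement_2 (L : ℝ) (hLN : L ∈ criticalN) :
    ∃ (lam : ℂ) (θ u : ℝ → ℂ),
      ContDiff ℝ 3 θ ∧ ContDiff ℝ 3 u ∧
      ¬(∀ x ∈ Icc (0 : ℝ) L, θ x = 0 ∧ u x = 0) ∧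
      (∀ x ∈ Icc (0 : ℝ) L, -deriv u x - deriv (deriv (deriv u)) x = lam * θ x) ∧
      (∀ x ∈ Icc (0 : ℝ) L, -deriv θ x - deriv (deriv (deriv θ)) x = lam * u x) ∧
      θ 0 = 0 ∧ θ L = 0 ∧ deriv θ 0 = 0 ∧ deriv θ L = 0 ∧
      u 0 = 0 ∧ u L = 0 ∧ deriv u L = 0 ∧
      deriv (deriv θ) L = 0 := by
  obtain ⟨k, l, hk, hl, rfl⟩ := hLN
  have hk' : (0 : ℝ) < k := by exact_mod_cast hk
  have hl' : (0 : ℝ) < l := by exact_mod_cast hl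
  have hpi := Real.pi_pos
  set L : ℝ := (2 * Real.pi / Real.sqrt 3) * Real.sqrt ((k : ℝ)^2 + (k : ℝ) * (l : ℝ) + (l : ℝ)^2)
    with hLdef
  have hL : 0 < L := by positivity
  have hL2 : 3 * L ^ 2 = 4 * Real.pi ^ 2 * ((k : ℝ)^2 + (k : ℝ) * (l : ℝ) + (l : ℝ)^2) := by
    rw [hLdef, mul_pow, div_pow, Real.sq_sqrt (by positivity), Real.sq_sqrt (by positivity)]
    ring
  clear_value L
  have hLC : (L : ℂ) ≠ 0 := by exact_mod_cast hL.ne'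
  have hL2C : 3 * (L : ℂ) ^ 2
      = 4 * (Real.pi : ℂ) ^ 2 * ((k : ℂ)^2 + (k : ℂ) * (l : ℂ) + (l : ℂ)^2) := by
    exact_mod_cast hL2
  have hkC : (k : ℂ) ≠ 0 := by exact_mod_cast hk.ne'
  have hlC : (l : ℂ) ≠ 0 := by exact_mod_cast hl.ne'
  have hklC : (k : ℂ) + l ≠ 0 := by
    have : k + l ≠ 0 := by omega
    exact_mod_cast this
  have hpiC : (Real.pi : ℂ) ≠ 0 := by exact_mod_cast hpi.ne'
  obtain ⟨t, ht⟩ : ∃ t : ℂ, t = 2 * Real.pi * Complex.I / L := ⟨_, rfl⟩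
  have htL : t * L = 2 * Real.pi * Complex.I := by rw [ht]; field_simp
  have ht0 : t ≠ 0 := by
    rintro rfl
    simp [hpiC] at htL
  have ht2 : t ^ 2 * ((k : ℂ)^2 + (k : ℂ) * (l : ℂ) + (l : ℂ)^2) = -3 := by
    have h : (t ^ 2 * ((k : ℂ)^2 + (k : ℂ) * (l : ℂ) + (l : ℂ)^2) + 3) * (L : ℂ) ^ 2 = 0 := by
      linear_combination ((k : ℂ)^2 + k * l + (l : ℂ)^2) * (t * L + 2 * Real.pi * Complex.I) * htL
        + hL2C + 4 * (Real.pi : ℂ)^2 * ((k : ℂ)^2 + k * l + (l : ℂ)^2) * Complex.I_sq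
    have := (mul_eq_zero.mp h).resolve_right (pow_ne_zero 2 hLC)
    linear_combination this
  obtain ⟨p, hp⟩ : ∃ p : ℂ, p = -(2 * k + l) / 3 * t := ⟨_, rfl⟩
  have ek : Complex.exp ((p + k * t) * L) = Complex.exp (p * L) := by
    have : (p + k * t) * L = p * L + k * (2 * Real.pi * Complex.I) := by
      linear_combination (k : ℂ) * htL
    rw [this, Complex.exp_add, Complex.exp_nat_mul_two_pi_mul_I, mul_one]
  have el : Complex.exp ((p + k * t + l * t) * L) = Complex.exp (p * L) := by
    have : (p + k * t + l * t) * L = (p + k * t) * L + l * (2 * Real.pi * Complex.I) := by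
      linear_combination (l : ℂ) * htL
    rw [this, Complex.exp_add, Complex.exp_nat_mul_two_pi_mul_I, mul_one, ek]
  refine main_aux L hL p (p + k * t) (p + k * t + l * t) (Complex.exp (p * L)) (-(p ^ 3 + p))
    ?_ ?_ ?_ ?_ ?_ ?_ rfl ek el
  · intro h
    exact mul_ne_zero hkC ht0 (by linear_combination -h)
  · intro h
    exact mul_ne_zero hlC ht0 (by linear_combination -h)
  · intro h
    exact mul_ne_zero hklC ht0 (by linear_combination -h)
  · ring
  · subst hp
    linear_combination ((k : ℂ) * t / 3) * ht2
  · subst hp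
    linear_combination (((k : ℂ) + l) * t / 3) * ht2
end

section
/- Let L ∈ 𝒩. Then there exist λ ∈ ℂ and three times continuously differentiable functions θ, u : [0,L] → ℂ, not both identically zero, satisfying −u′(x) − u‴(x) = λ·θ(x) and −θ′(x) − θ‴(x) = λ·u(x) for all x ∈ [0,L], the boundary conditions θ(0) = θ(L) = θ′(0) = θ′(L) = 0 and u(0) = u(L) = u′(L) = 0, and additionally u″(0) = 0. -/
open Set

/-- Sum of three sines. -/
noncomputable def sinS (m1 m2 m3 a b c : ℂ) (x : ℝ) : ℂ :=
  a * Complex.sin (m1 * x) + b * Complex.sin (m2 * x) + c * Complex.sin (m3 * x)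

/-- Sum of three cosines. -/
noncomputable def cosS (m1 m2 m3 a b c : ℂ) (x : ℝ) : ℂ :=
  a * Complex.cos (m1 * x) + b * Complex.cos (m2 * x) + c * Complex.cos (m3 * x)

lemma hasDerivAt_csin (m : ℂ) (x : ℝ) :
    HasDerivAt (fun x : ℝ => Complex.sin (m * x)) (m * Complex.cos (m * x)) x := by
  have h : HasDerivAt (fun z : ℂ => Complex.sin (m * z)) (Complex.cos (m * x) * (m * 1)) (x : ℂ) :=
    ((hasDerivAt_id (x : ℂ)).const_mul m).csin
  have := h.comp_ofReal
  convert this using 1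
  ring

lemma hasDerivAt_ccos (m : ℂ) (x : ℝ) :
    HasDerivAt (fun x : ℝ => Complex.cos (m * x)) (-m * Complex.sin (m * x)) x := by
  have h : HasDerivAt (fun z : ℂ => Complex.cos (m * z)) (-Complex.sin (m * x) * (m * 1)) (x : ℂ) :=
    ((hasDerivAt_id (x : ℂ)).const_mul m).ccos
  have := h.comp_ofReal
  convert this using 1
  ring

lemma deriv_sinS (m1 m2 m3 a b c : ℂ) :
    deriv (sinS m1 m2 m3 a b c) = cosS m1 m2 m3 (a * m1) (b * m2) (c * m3) := by
  funext x
  have := (((hasDerivAt_csin m1 x).const_mul a).add ((hasDerivAt_csin m2 x).const_mul b)).add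
    ((hasDerivAt_csin m3 x).const_mul c)
  refine (HasDerivAt.deriv (f := sinS m1 m2 m3 a b c) this).trans ?_
  unfold cosS; ring

lemma deriv_cosS (m1 m2 m3 a b c : ℂ) :
    deriv (cosS m1 m2 m3 a b c) = sinS m1 m2 m3 (-a * m1) (-b * m2) (-c * m3) := by
  funext x
  have := (((hasDerivAt_ccos m1 x).const_mul a).add ((hasDerivAt_ccos m2 x).const_mul b)).add
    ((hasDerivAt_ccos m3 x).const_mul c)
  refine (HasDerivAt.deriv (f := cosS m1 m2 m3 a b c) this).trans ?_
  unfold sinS; ring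

lemma contDiff_sinS (m1 m2 m3 a b c : ℂ) : ContDiff ℝ 3 (sinS m1 m2 m3 a b c) := by
  have h : ∀ m : ℂ, ContDiff ℝ 3 (fun x : ℝ => Complex.sin (m * x)) := fun m =>
    (Complex.contDiff_sin.restrict_scalars ℝ).comp
      (contDiff_const.mul Complex.ofRealCLM.contDiff)
  exact ((contDiff_const.mul (h m1)).add (contDiff_const.mul (h m2))).add
    (contDiff_const.mul (h m3))

lemma contDiff_cosS (m1 m2 m3 a b c : ℂ) : ContDiff ℝ 3 (cosS m1 m2 m3 a b c) := by
  have h : ∀ m : ℂ, ContDiff ℝ 3 (fun x : ℝ => Complex.cos (m * x)) := fun m =>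
    (Complex.contDiff_cos.restrict_scalars ℝ).comp
      (contDiff_const.mul Complex.ofRealCLM.contDiff)
  exact ((contDiff_const.mul (h m1)).add (contDiff_const.mul (h m2))).add
    (contDiff_const.mul (h m3))

/-- If `L ∈ 𝒩`, the spectral problem for the linearized Boussinesq system with boundary
conditions `θ(0) = θ(L) = θ′(0) = θ′(L) = 0`, `u(0) = u(L) = u′(L) = 0` admits a nontrivial
solution satisfying the additional condition `deriv (deriv u) 0 = 0`. -/
theorem statement_3 (L : ℝ) (hLN : L ∈ criticalN) :
    ∃ (lam : ℂ) (θ u : ℝ → ℂ),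
      ContDiff ℝ 3 θ ∧ ContDiff ℝ 3 u ∧
      ¬(∀ x ∈ Icc (0 : ℝ) L, θ x = 0 ∧ u x = 0) ∧
      (∀ x ∈ Icc (0 : ℝ) L, -deriv u x - deriv (deriv (deriv u)) x = lam * θ x) ∧
      (∀ x ∈ Icc (0 : ℝ) L, -deriv θ x - deriv (deriv (deriv θ)) x = lam * u x) ∧
      θ 0 = 0 ∧ θ L = 0 ∧ deriv θ 0 = 0 ∧ deriv θ L = 0 ∧
      u 0 = 0 ∧ u L = 0 ∧ deriv u L = 0 ∧
      deriv (deriv u) 0 = 0 := by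
  obtain ⟨k, l, hk, hl, hL⟩ := hLN
  have hk' : (0 : ℝ) < k := by exact_mod_cast hk
  have hl' : (0 : ℝ) < l := by exact_mod_cast hl
  have hN : (0 : ℝ) < (k : ℝ)^2 + (k : ℝ) * (l : ℝ) + (l : ℝ)^2 := by positivity
  have hLpos : 0 < L := by rw [hL]; positivity
  have hL2 : L ^ 2 * 3 = 4 * Real.pi ^ 2 * ((k : ℝ)^2 + (k : ℝ) * (l : ℝ) + (l : ℝ)^2) := by
    rw [hL, mul_pow, div_pow, Real.sq_sqrt hN.le, Real.sq_sqrt (by norm_num)]; ring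
  obtain ⟨h, hh⟩ : ∃ h : ℝ, h = 2 * Real.pi / L := ⟨_, rfl⟩
  have hhL : h * L = 2 * Real.pi := by rw [hh]; field_simp
  have hh2 : h ^ 2 * ((k : ℝ)^2 + (k : ℝ) * (l : ℝ) + (l : ℝ)^2) = 3 := by
    rw [hh, div_pow, div_mul_eq_mul_div, div_eq_iff (by positivity)]; linarith
  have hhLc : (h : ℂ) * L = 2 * Real.pi := by exact_mod_cast hhL
  have hh2c : (h : ℂ) ^ 2 * ((k : ℂ)^2 + (k : ℂ) * (l : ℂ) + (l : ℂ)^2) = 3 := by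
    exact_mod_cast hh2
  obtain ⟨m1, e1⟩ : ∃ m : ℂ, m = -(2 * k + l) * h / 3 := ⟨_, rfl⟩
  obtain ⟨m2, e2⟩ : ∃ m : ℂ, m = (k - l) * h / 3 := ⟨_, rfl⟩
  obtain ⟨m3, e3⟩ : ∃ m : ℂ, m = (k + 2 * l) * h / 3 := ⟨_, rfl⟩
  have d1 : m1 * L = m2 * L - k * (2 * Real.pi) := by
    rw [← hhLc, e1, e2]; ring
  have d3 : m3 * L = m2 * L + l * (2 * Real.pi) := by
    rw [← hhLc, e3, e2]; ring
  have c1 : Complex.cos (m1 * L) = Complex.cos (m2 * L) := by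
    rw [d1, Complex.cos_sub_nat_mul_two_pi]
  have c3 : Complex.cos (m3 * L) = Complex.cos (m2 * L) := by
    rw [d3, Complex.cos_add_nat_mul_two_pi]
  have s1 : Complex.sin (m1 * L) = Complex.sin (m2 * L) := by
    rw [d1, Complex.sin_sub_nat_mul_two_pi]
  have s3 : Complex.sin (m3 * L) = Complex.sin (m2 * L) := by
    rw [d3, Complex.sin_add_nat_mul_two_pi]
  have am : -(l : ℂ) * m1 + (k + l) * m2 + -(k : ℂ) * m3 = 0 := by
    rw [e1, e2, e3]; ring
  have q1 : m1 ^ 3 - m1 = m2 ^ 3 - m2 := by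
    rw [e1, e2]; linear_combination (-(k : ℂ) * h / 3) * hh2c
  have q3 : m3 ^ 3 - m3 = m2 ^ 3 - m2 := by
    rw [e3, e2]; linear_combination ((l : ℂ) * h / 3) * hh2c
  have hI : Complex.I * Complex.I = -1 := Complex.I_mul_I
  refine ⟨-Complex.I * (m2 ^ 3 - m2),
    cosS m1 m2 m3 (Complex.I * -l) (Complex.I * (k + l)) (Complex.I * -k),
    sinS m1 m2 m3 (-l) (k + l) (-k), contDiff_cosS .., contDiff_sinS .., ?_, ?_, ?_,
    ?_, ?_, ?_, ?_, ?_, ?_, ?_, ?_⟩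
  · intro H
    have hk1 : (1 : ℝ) ≤ k := by exact_mod_cast hk
    obtain ⟨x, hx⟩ : ∃ x : ℝ, x = L / (2 * k) := ⟨_, rfl⟩
    have hxm : x ∈ Icc (0 : ℝ) L := by
      rw [hx]
      exact ⟨by positivity, div_le_self hLpos.le (by linarith)⟩
    obtain ⟨hT, hU⟩ := H x hxm
    have hkx : (k : ℝ) * h * x = Real.pi := by
      rw [hx, hh]; field_simp
    have hkxc : (k : ℂ) * h * x = Real.pi := by exact_mod_cast hkx
    simp only [sinS, cosS] at hT hU
    have f1 : Complex.cos (m2 * x - m1 * x) = -1 := by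
      rw [← Complex.cos_pi, ← hkxc, e1, e2]; ring_nf
    have f3 : Complex.cos (m3 * x - m2 * x) = (Real.cos (l * h * x) : ℝ) := by
      rw [Complex.ofReal_cos, e3, e2]; push_cast; ring_nf
    have f2 := Complex.sin_sq_add_cos_sq (m2 * x)
    rw [Complex.cos_sub] at f1 f3
    have key : (l : ℂ) + (k + l) - k * (Real.cos (l * h * x) : ℝ) = 0 := by
      rw [← f3]
      linear_combination (-Complex.I * Complex.cos (m2 * x)) * hT + Complex.sin (m2 * x) * hU
        + (l : ℂ) * f1 - ((k : ℂ) + l) * f2 + Complex.cos (m2 * x) * (-l * Complex.cos (m1 * x)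
          + (k + l) * Complex.cos (m2 * x) - k * Complex.cos (m3 * x)) * hI
    have key' : (l : ℝ) + (k + l) - k * Real.cos (l * h * x) = 0 := by exact_mod_cast key
    nlinarith [Real.cos_le_one (l * h * x)]
  · intro x _
    simp only [deriv_sinS, deriv_cosS]
    simp only [sinS, cosS]
    linear_combination (-l * Complex.cos (m1 * x)) * q1 - k * Complex.cos (m3 * x) * q3
      + (m2 ^ 3 - m2) * (-l * Complex.cos (m1 * x)
          + (k + l) * Complex.cos (m2 * x) - k * Complex.cos (m3 * x)) * hI
  · intro x _
    simp only [deriv_sinS, deriv_cosS]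
    simp only [sinS, cosS]
    linear_combination (Complex.I * l * Complex.sin (m1 * x)) * q1
      + Complex.I * k * Complex.sin (m3 * x) * q3
  · simp only [cosS]; simp; ring
  · simp only [cosS, c1, c3]; ring
  · simp only [deriv_cosS]; simp [sinS]
  · simp only [deriv_cosS]; simp only [sinS, s1, s3]
    linear_combination (-Complex.I * Complex.sin (m2 * L)) * am
  · simp [sinS]
  · simp only [sinS, s1, s3]; ring
  · simp only [deriv_sinS]; simp only [cosS, c1, c3]
    linear_combination (Complex.cos (m2 * L)) * am
  · simp only [deriv_sinS, deriv_cosS]; simp [sinS]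
end

section
/- Let L ∈ 𝒩. Then there exist λ ∈ ℂ and three times continuously differentiable functions θ, u : [0,L] → ℂ, not both identically zero, satisfying −u′(x) − u‴(x) = λ·θ(x) and −θ′(x) − θ‴(x) = λ·u(x) for all x ∈ [0,L], the boundary conditions θ(0) = θ(L) = θ′(0) = θ′(L) = 0 and u(0) = u(L) = u′(L) = 0, and additionally θ″(0) = 0. -/
open Set

/-- Sine combination. -/
noncomputable def auxS (m1 m2 m3 : ℝ) (a b c : ℂ) (x : ℝ) : ℂ :=
  a * (Real.sin (m1 * x) : ℂ) + b * (Real.sin (m2 * x) : ℂ) + c * (Real.sin (m3 * x) : ℂ)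

/-- Cosine combination. -/
noncomputable def auxK (m1 m2 m3 : ℝ) (a b c : ℂ) (x : ℝ) : ℂ :=
  a * (Real.cos (m1 * x) : ℂ) + b * (Real.cos (m2 * x) : ℂ) + c * (Real.cos (m3 * x) : ℂ)

lemma aux_sin (m : ℝ) (a : ℂ) (x : ℝ) :
    HasDerivAt (fun x : ℝ => a * (Real.sin (m * x) : ℂ)) (a * m * (Real.cos (m * x) : ℂ)) x := by
  have h : HasDerivAt (fun x : ℝ => Real.sin (m * x)) (Real.cos (m * x) * (m * 1)) x :=
    ((hasDerivAt_id x).const_mul m).sin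
  refine ((h.ofReal_comp).const_mul a).congr_deriv ?_
  push_cast; ring

lemma aux_cos (m : ℝ) (a : ℂ) (x : ℝ) :
    HasDerivAt (fun x : ℝ => a * (Real.cos (m * x) : ℂ)) (-(a * m) * (Real.sin (m * x) : ℂ)) x := by
  have h : HasDerivAt (fun x : ℝ => Real.cos (m * x)) (-Real.sin (m * x) * (m * 1)) x :=
    ((hasDerivAt_id x).const_mul m).cos
  refine ((h.ofReal_comp).const_mul a).congr_deriv ?_
  push_cast; ring

lemma deriv_auxS (m1 m2 m3 : ℝ) (a b c : ℂ) :
    deriv (auxS m1 m2 m3 a b c) = auxK m1 m2 m3 (a * m1) (b * m2) (c * m3) := by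
  funext x
  exact (((aux_sin m1 a x).add (aux_sin m2 b x)).add (aux_sin m3 c x)).deriv

lemma deriv_auxK (m1 m2 m3 : ℝ) (a b c : ℂ) :
    deriv (auxK m1 m2 m3 a b c) = auxS m1 m2 m3 (-(a * m1)) (-(b * m2)) (-(c * m3)) := by
  funext x
  exact (((aux_cos m1 a x).add (aux_cos m2 b x)).add (aux_cos m3 c x)).deriv

lemma aux_smooth (f : ℝ → ℝ) (hf : ContDiff ℝ 3 f) : ContDiff ℝ 3 (fun x => (f x : ℂ)) :=
  Complex.ofRealCLM.contDiff.comp hf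

lemma contDiff_auxS (m1 m2 m3 : ℝ) (a b c : ℂ) : ContDiff ℝ 3 (auxS m1 m2 m3 a b c) := by
  have h (m : ℝ) : ContDiff ℝ 3 (fun x : ℝ => (Real.sin (m * x) : ℂ)) :=
    aux_smooth _ (Real.contDiff_sin.comp (contDiff_const.mul contDiff_id))
  exact ((contDiff_const.mul (h m1)).add (contDiff_const.mul (h m2))).add
    (contDiff_const.mul (h m3))

lemma contDiff_auxK (m1 m2 m3 : ℝ) (a b c : ℂ) : ContDiff ℝ 3 (auxK m1 m2 m3 a b c) := by
  have h (m : ℝ) : ContDiff ℝ 3 (fun x : ℝ => (Real.cos (m * x) : ℂ)) :=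
    aux_smooth _ (Real.contDiff_cos.comp (contDiff_const.mul contDiff_id))
  exact ((contDiff_const.mul (h m1)).add (contDiff_const.mul (h m2))).add
    (contDiff_const.mul (h m3))

set_option maxHeartbeats 1000000 in
/-- If `L ∈ 𝒩`, the spectral problem for the linearized Boussinesq system with boundary
conditions `θ(0) = θ(L) = θ′(0) = θ′(L) = 0`, `u(0) = u(L) = u′(L) = 0` admits a nontrivial
solution satisfying the additional condition `deriv (deriv θ) 0 = 0`. -/
theorem statement_4 (L : ℝ) (hLN : L ∈ criticalN) :
    ∃ (lam : ℂ) (θ u : ℝ → ℂ),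
      ContDiff ℝ 3 θ ∧ ContDiff ℝ 3 u ∧
      ¬(∀ x ∈ Icc (0 : ℝ) L, θ x = 0 ∧ u x = 0) ∧
      (∀ x ∈ Icc (0 : ℝ) L, -deriv u x - deriv (deriv (deriv u)) x = lam * θ x) ∧
      (∀ x ∈ Icc (0 : ℝ) L, -deriv θ x - deriv (deriv (deriv θ)) x = lam * u x) ∧
      θ 0 = 0 ∧ θ L = 0 ∧ deriv θ 0 = 0 ∧ deriv θ L = 0 ∧
      u 0 = 0 ∧ u L = 0 ∧ deriv u L = 0 ∧
      deriv (deriv θ) 0 = 0 := by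
  obtain ⟨k, l, hk, hl, hL⟩ := hLN
  have hk' : (0 : ℝ) < k := by exact_mod_cast hk
  have hl' : (0 : ℝ) < l := by exact_mod_cast hl
  have hQ : (0 : ℝ) < (k : ℝ)^2 + (k : ℝ) * l + (l : ℝ)^2 := by positivity
  have hLpos : 0 < L := by
    rw [hL]
    have := Real.pi_pos
    positivity
  have hL2 : 3 * L ^ 2 = 4 * Real.pi ^ 2 * ((k : ℝ)^2 + (k : ℝ) * l + (l : ℝ)^2) := by
    rw [hL, mul_pow, div_pow, Real.sq_sqrt hQ.le, Real.sq_sqrt (by norm_num)]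
    ring
  obtain ⟨d, hd⟩ : ∃ d, d = 2 * Real.pi / (3 * L) := ⟨_, rfl⟩
  have hdL : 3 * d * L = 2 * Real.pi := by rw [hd]; field_simp
  have hd0 : 0 < d := by rw [hd]; have := Real.pi_pos; positivity
  have hd2 : 3 * d ^ 2 * ((k : ℝ)^2 + (k : ℝ) * l + (l : ℝ)^2) = 1 := by
    have h1 : 4 * Real.pi ^ 2 = 9 * d ^ 2 * L ^ 2 := by
      have : (3 * d * L) ^ 2 = (2 * Real.pi) ^ 2 := by rw [hdL]
      linarith
    rw [h1] at hL2
    have : L ^ 2 ≠ 0 := by positivity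
    apply mul_left_cancel₀ this
    linarith
  obtain ⟨m1, hm1⟩ : ∃ m, m = -(2 * k + l) * d := ⟨_, rfl⟩
  obtain ⟨m2, hm2⟩ : ∃ m, m = (k - l) * d := ⟨_, rfl⟩
  obtain ⟨m3, hm3⟩ : ∃ m, m = (k + 2 * l) * d := ⟨_, rfl⟩
  have e1 : m1 + m2 + m3 = 0 := by rw [hm1, hm2, hm3]; ring
  have e2 : m1 * m2 + m1 * m3 + m2 * m3 = -1 := by
    rw [hm1, hm2, hm3]; linear_combination -hd2
  obtain ⟨p, hp⟩ : ∃ p, p = - (m1 * m2 * m3) := ⟨_, rfl⟩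
  have r1 : m1 - m1 ^ 3 = p := by
    rw [hp]; linear_combination -m1 ^ 2 * e1 + m1 * e2
  have r2 : m2 - m2 ^ 3 = p := by
    rw [hp]; linear_combination -m2 ^ 2 * e1 + m2 * e2
  have r3 : m3 - m3 ^ 3 = p := by
    rw [hp]; linear_combination -m3 ^ 2 * e1 + m3 * e2
  have r1c : (m1 : ℂ) - m1 ^ 3 = p := by exact_mod_cast r1
  have r2c : (m2 : ℂ) - m2 ^ 3 = p := by exact_mod_cast r2
  have r3c : (m3 : ℂ) - m3 ^ 3 = p := by exact_mod_cast r3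
  have a1 : m1 * L = m2 * L - k * (2 * Real.pi) := by
    rw [hm1, hm2, ← hdL]; ring
  have a3 : m3 * L = m2 * L + l * (2 * Real.pi) := by
    rw [hm3, hm2, ← hdL]; ring
  have s1 : Real.sin (m1 * L) = Real.sin (m2 * L) := by rw [a1, Real.sin_sub_nat_mul_two_pi]
  have s3 : Real.sin (m3 * L) = Real.sin (m2 * L) := by rw [a3, Real.sin_add_nat_mul_two_pi]
  have c1 : Real.cos (m1 * L) = Real.cos (m2 * L) := by rw [a1, Real.cos_sub_nat_mul_two_pi]
  have c3 : Real.cos (m3 * L) = Real.cos (m2 * L) := by rw [a3, Real.cos_add_nat_mul_two_pi]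
  have hI := Complex.I_sq
  refine ⟨Complex.I * p, auxS m1 m2 m3 (m3 - m2) (m1 - m3) (m2 - m1),
    auxK m1 m2 m3 (Complex.I * (m3 - m2)) (Complex.I * (m1 - m3)) (Complex.I * (m2 - m1)),
    contDiff_auxS _ _ _ _ _ _, contDiff_auxK _ _ _ _ _ _, ?_, ?_, ?_, ?_, ?_, ?_, ?_, ?_, ?_, ?_, ?_⟩
  · intro h
    have hk1 : (1 : ℝ) ≤ k := by exact_mod_cast hk
    obtain ⟨x, hx⟩ : ∃ x, x = L / (2 * k) := ⟨_, rfl⟩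
    have hmem : x ∈ Icc (0 : ℝ) L := by
      rw [hx]
      refine ⟨by positivity, ?_⟩
      rw [div_le_iff₀ (by positivity)]
      nlinarith
    obtain ⟨hS, hK⟩ := h x hmem
    have hK' : auxK m1 m2 m3 (m3 - m2) (m1 - m3) (m2 - m1) x = 0 := by
      have : Complex.I * auxK m1 m2 m3 (m3 - m2) (m1 - m3) (m2 - m1) x = 0 := by
        rw [← hK]; simp only [auxK]; ring
      exact (mul_eq_zero.mp this).resolve_left Complex.I_ne_zero
    have hSr : (m3 - m2) * Real.sin (m1 * x) + (m1 - m3) * Real.sin (m2 * x)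
        + (m2 - m1) * Real.sin (m3 * x) = 0 := by
      simp only [auxS] at hS; exact_mod_cast hS
    have hKr : (m3 - m2) * Real.cos (m1 * x) + (m1 - m3) * Real.cos (m2 * x)
        + (m2 - m1) * Real.cos (m3 * x) = 0 := by
      simp only [auxK] at hK'; exact_mod_cast hK'
    have g1 : Real.cos (m2 * x - m1 * x) = -1 := by
      rw [← Real.cos_pi]; congr 1
      have : 3 * d * L = 2 * Real.pi := hdL
      rw [hm1, hm2, hx]; field_simp; linear_combination (k : ℝ) * hdL
    have g3 := Real.cos_le_one (m2 * x - m3 * x)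
    rw [Real.cos_sub] at g1 g3
    have g2 := Real.sin_sq_add_cos_sq (m2 * x)
    have d1 : 0 < m2 - m1 := by
      have : m2 - m1 = 3 * k * d := by rw [hm1, hm2]; ring
      rw [this]; positivity
    have d2 : 0 < m3 - m2 := by
      have : m3 - m2 = 3 * l * d := by rw [hm3, hm2]; ring
      rw [this]; positivity
    have key : (m3 - m2) * (-1) + (m1 - m3) + (m2 - m1) * (Real.cos (m2 * x) * Real.cos (m3 * x) +
        Real.sin (m2 * x) * Real.sin (m3 * x)) = 0 := by
      rw [← g1]
      linear_combination Real.cos (m2 * x) * hKr + Real.sin (m2 * x) * hSr - (m1 - m3) * g2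
    have g4 := mul_le_mul_of_nonneg_left g3 d1.le
    clear hSr hKr g1 g2 g3 hd2 hL2 e2 r1 r2 r3 hp
    linarith only [g4, key, d1, d2]
  · intro x _
    simp only [deriv_auxS, deriv_auxK]
    simp only [auxS, auxK]
    rw [mul_add, mul_add]
    generalize (Real.sin (m1 * x) : ℂ) = A
    generalize (Real.sin (m2 * x) : ℂ) = B
    generalize (Real.sin (m3 * x) : ℂ) = C
    linear_combination Complex.I * (m3 - m2) * A * r1c + Complex.I * (m1 - m3) * B * r2c
      + Complex.I * (m2 - m1) * C * r3c
  · intro x _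
    simp only [deriv_auxS, deriv_auxK]
    simp only [auxS, auxK]
    generalize (Real.cos (m1 * x) : ℂ) = A
    generalize (Real.cos (m2 * x) : ℂ) = B
    generalize (Real.cos (m3 * x) : ℂ) = C
    linear_combination -(m3 - m2) * A * r1c - (m1 - m3) * B * r2c
      - (m2 - m1) * C * r3c - p * ((m3 - m2) * A + (m1 - m3) * B + (m2 - m1) * C) * hI
  · simp [auxS]
  · simp only [auxS, s1, s3]; ring
  · simp only [deriv_auxS, auxK, mul_zero, Real.cos_zero]; push_cast; ring
  · simp only [deriv_auxS, auxK, c1, c3]; ring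
  · simp only [auxK, mul_zero, Real.cos_zero]; push_cast; ring
  · simp only [auxK, c1, c3]; ring
  · simp only [deriv_auxK, auxS, s1, s3]; ring
  · simp [deriv_auxS, deriv_auxK, auxS]
end

section
/- Let L > 0. There exist λ ∈ ℂ and three times continuously differentiable functions θ, u : [0,L] → ℂ, not both identically zero, satisfying −u′(x) − u‴(x) = λ·θ(x) and −θ′(x) − θ‴(x) = λ·u(x) for all x ∈ [0,L], with boundary conditions θ(0) = θ(L) = θ′(0) = θ″(L) = 0 and u(0) = u(L) = u′(L) = 0, if and only if L ∈ 𝒩 ∪ ℛ. -/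
open Set

/-- The set ℛ = { π·√((1/2+2k)² + (1/2+2l)² + (1/2+2k)(1/2+2l)) : k, l ∈ ℤ, k ≠ l }. -/
def criticalR : Set ℝ :=
  {x | ∃ k l : ℤ, k ≠ l ∧
    x = Real.pi * Real.sqrt ((1/2 + 2*(k : ℝ))^2 + (1/2 + 2*(l : ℝ))^2
      + (1/2 + 2*(k : ℝ)) * (1/2 + 2*(l : ℝ)))}

/-- The set 𝒩₃ = { (2π/√3)·√(k² + k·l + l²) : k, l positive integers, 3 ∣ 2k + l }. -/
def criticalN3 : Set ℝ :=
  {x | ∃ k l : ℕ, 0 < k ∧ 0 < l ∧ 3 ∣ 2 * k + l ∧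
    x = (2 * Real.pi / Real.sqrt 3) * Real.sqrt ((k : ℝ)^2 + (k : ℝ) * (l : ℝ) + (l : ℝ)^2)}

/-- First-order form of `y''' + y' + lam y = 0` on `[0,L]`. -/
def IsSol (lam : ℂ) (L : ℝ) (y y1 y2 : ℝ → ℂ) : Prop :=
  ∀ x ∈ Icc (0 : ℝ) L, HasDerivAt y (y1 x) x ∧ HasDerivAt y1 (y2 x) x ∧
    HasDerivAt y2 (-(y1 x) - lam * y x) x

lemma const_of_deriv_zero {L : ℝ} (f : ℝ → ℂ)
    (h : ∀ x ∈ Icc (0 : ℝ) L, HasDerivAt f 0 x) : ∀ x ∈ Icc (0 : ℝ) L, f x = f 0 := by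
  apply constant_of_has_deriv_right_zero
  · intro x hx
    exact (h x hx).continuousAt.continuousWithinAt
  · intro x hx
    exact (h x ⟨hx.1, hx.2.le⟩).hasDerivWithinAt

lemma hasDerivAt_cexp (s : ℂ) (x : ℝ) :
    HasDerivAt (fun x : ℝ => Complex.exp (s * x)) (Complex.exp (s * x) * s) x := by
  have h1 : HasDerivAt (fun x : ℝ => s * (x : ℂ)) (s * 1) x :=
    (Complex.ofRealCLM.hasDerivAt (x := x)).const_mul s
  simpa using h1.cexp

lemma IsSol.root {lam : ℂ} {L : ℝ} (hL : 0 < L) {y y1 y2 : ℝ → ℂ} (h : IsSol lam L y y1 y2)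
    (h0 : y 0 = 0) (h1 : y L = 0) {s : ℂ} (hs : s ^ 3 + s + lam = 0) :
    (y2 0 + s * y1 0) * Complex.exp (s * L) = y2 L + s * y1 L := by
  have key := const_of_deriv_zero (L := L)
    (fun x => (y2 x + s * y1 x + (s ^ 2 + 1) * y x) * Complex.exp ((-s) * x)) (by
      intro x hx
      obtain ⟨a, b, c⟩ := h x hx
      have := ((c.add (b.const_mul s)).add (a.const_mul (s ^ 2 + 1))).mul (hasDerivAt_cexp (-s) x)
      refine HasDerivAt.congr_deriv (this) (Eq.symm ?_)
      try simp only [Pi.add_apply]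
      linear_combination (y x * Complex.exp (-s * x)) * hs) L ⟨hL.le, le_rfl⟩
  simp only [h0, h1, mul_zero, add_zero, Complex.ofReal_zero, Complex.exp_zero, mul_one] at key
  have e : Complex.exp (-s * L) * Complex.exp (s * L) = 1 := by
    rw [← Complex.exp_add]; simp
  linear_combination (-Complex.exp (s * L)) * key + (y2 L + s * y1 L) * e

lemma IsSol.dbl {lam : ℂ} {L : ℝ} (hL : 0 < L) {y y1 y2 : ℝ → ℂ} (h : IsSol lam L y y1 y2)
    (h0 : y 0 = 0) (h1 : y L = 0) {s : ℂ} (hs : s ^ 3 + s + lam = 0) (hd : 3 * s ^ 2 + 1 = 0) :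
    y1 0 * Complex.exp (s * L) = y1 L - L * (y2 L + s * y1 L) := by
  have key := const_of_deriv_zero (L := L)
    (fun x => ((y1 x + (2 * s) * y x) - (x : ℂ) * (y2 x + s * y1 x + (s ^ 2 + 1) * y x))
        * Complex.exp ((-s) * x)) (by
      intro x hx
      obtain ⟨a, b, c⟩ := h x hx
      have hx' : HasDerivAt (fun x : ℝ => (x : ℂ)) 1 x := Complex.ofRealCLM.hasDerivAt (x := x)
      have := ((b.add (a.const_mul (2 * s))).sub
        (hx'.mul ((c.add (b.const_mul s)).add (a.const_mul (s ^ 2 + 1))))).mul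
          (hasDerivAt_cexp (-s) x)
      refine HasDerivAt.congr_deriv (this) (Eq.symm ?_)
      try simp only [Pi.add_apply, Pi.sub_apply, Pi.mul_apply]
      linear_combination (-(x : ℂ) * y x * Complex.exp (-s * x)) * hs
        + (y x * Complex.exp (-s * x)) * hd) L ⟨hL.le, le_rfl⟩
  simp only [h0, h1, mul_zero, add_zero, Complex.ofReal_zero, Complex.exp_zero, mul_one,
    zero_mul, sub_zero] at key
  have e : Complex.exp (-s * L) * Complex.exp (s * L) = 1 := by
    rw [← Complex.exp_add]; simp
  linear_combination (-Complex.exp (s * L)) * key + (y1 L - L * (y2 L + s * y1 L)) * e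

lemma zero_of_lin {L : ℝ} (z : ℝ → ℂ) (b : ℂ)
    (h : ∀ x ∈ Icc (0 : ℝ) L, HasDerivAt z (b * z x) x) (h0 : z 0 = 0) :
    ∀ x ∈ Icc (0 : ℝ) L, z x = 0 := by
  intro x hx
  have key := const_of_deriv_zero (L := L) (fun x => z x * Complex.exp ((-b) * x)) (by
      intro x hx
      refine HasDerivAt.congr_deriv ((h x hx).mul (hasDerivAt_cexp (-b) x)) (Eq.symm ?_)
      ring) x hx
  simpa [h0, Complex.exp_ne_zero] using key

lemma exists_roots (lam : ℂ) : ∃ a b c : ℂ, a + b + c = 0 ∧ a * b + b * c + c * a = 1 ∧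
    a * b * c = -lam := by
  obtain ⟨a, ha⟩ : ∃ a : ℂ, a ^ 3 + a + lam = 0 := by
    have hd : (Polynomial.X ^ 3 + Polynomial.X + Polynomial.C lam : Polynomial ℂ).degree = 3 := by
      compute_degree!
    obtain ⟨a, ha⟩ := IsAlgClosed.exists_root _ (by rw [hd]; norm_num)
    exact ⟨a, by simpa [Polynomial.IsRoot] using ha⟩
  obtain ⟨d, hd⟩ := IsAlgClosed.exists_pow_nat_eq (-3 * a ^ 2 - 4) (n := 2) (by norm_num)
  refine ⟨a, (-a + d) / 2, (-a - d) / 2, by ring, ?_, ?_⟩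
  · linear_combination (-1 / 4) * hd
  · linear_combination (-a / 4) * hd + ha

lemma IsSol.eq_zero {lam : ℂ} {L : ℝ} {y y1 y2 : ℝ → ℂ} (h : IsSol lam L y y1 y2)
    (h0 : y 0 = 0) (h1 : y1 0 = 0) (h2 : y2 0 = 0) : ∀ x ∈ Icc (0 : ℝ) L, y x = 0 := by
  obtain ⟨a, b, c, e1, e2, e3⟩ := exists_roots lam
  have s1 := zero_of_lin (L := L) (fun x => y2 x + a * y1 x + (a ^ 2 + 1) * y x) a (by
    intro x hx
    obtain ⟨p, q, r⟩ := h x hx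
    refine HasDerivAt.congr_deriv ((r.add (q.const_mul a)).add (p.const_mul (a ^ 2 + 1))) (Eq.symm ?_)
    obtain rfl : c = -a - b := by linear_combination e1
    linear_combination (y x) * e3 - a * y x * e2) (by simp [h0, h1, h2])
  have s2 := zero_of_lin (L := L) (fun x => y1 x - b * y x) c (by
    intro x hx
    obtain ⟨p, q, r⟩ := h x hx
    refine HasDerivAt.congr_deriv (q.sub (p.const_mul b)) (Eq.symm ?_)
    have := s1 x hx
    obtain rfl : c = -a - b := by linear_combination e1
    linear_combination (-1) * this - (y x) * e2) (by simp [h0, h1])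
  apply zero_of_lin y b _ h0
  intro x hx
  obtain ⟨p, q, r⟩ := h x hx
  convert p using 1
  have := s2 x hx
  linear_combination - this

lemma int_form (n m : ℤ) (hn : n ≠ 0) (hm : m ≠ 0) (hnm : n + m ≠ 0) :
    ∃ k l : ℕ, 0 < k ∧ 0 < l ∧ (k : ℤ) ^ 2 + k * l + (l : ℤ) ^ 2 = n ^ 2 + n * m + m ^ 2 := by
  suffices H : ∃ k l : ℤ, 0 < k ∧ 0 < l ∧ k ^ 2 + k * l + l ^ 2 = n ^ 2 + n * m + m ^ 2 by
    obtain ⟨k, l, hk, hl, e⟩ := H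
    lift k to ℕ using hk.le
    lift l to ℕ using hl.le
    exact ⟨k, l, by exact_mod_cast hk, by exact_mod_cast hl, e⟩
  rcases lt_or_gt_of_ne hn with h1 | h1 <;> rcases lt_or_gt_of_ne hm with h2 | h2
  · exact ⟨-n, -m, by omega, by omega, by ring⟩
  · rcases lt_or_gt_of_ne hnm with h3 | h3
    · exact ⟨-(n + m), m, by omega, by omega, by ring⟩
    · exact ⟨n + m, -n, by omega, by omega, by ring⟩
  · rcases lt_or_gt_of_ne hnm with h3 | h3
    · exact ⟨-(n + m), n, by omega, by omega, by ring⟩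
    · exact ⟨n + m, -m, by omega, by omega, by ring⟩
  · exact ⟨n, m, by omega, by omega, by ring⟩

lemma memN_of_exp {L : ℝ} (hL : 0 < L) {a b c : ℂ} (e1 : a + b + c = 0)
    (e2 : a * b + b * c + c * a = 1) (hab : a ≠ b) (hbc : b ≠ c) (hac : a ≠ c)
    (h1 : Complex.exp (a * L) = Complex.exp (b * L))
    (h2 : Complex.exp (b * L) = Complex.exp (c * L)) : L ∈ criticalN := by
  obtain ⟨n, hn⟩ := Complex.exp_eq_exp_iff_exists_int.1 h1
  obtain ⟨m, hm⟩ := Complex.exp_eq_exp_iff_exists_int.1 h2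
  have hLc : (L : ℂ) ≠ 0 := by exact_mod_cast hL.ne'
  have n0 : n ≠ 0 := by
    rintro rfl
    exact hab (mul_right_cancel₀ hLc (by simpa using hn))
  have m0 : m ≠ 0 := by
    rintro rfl
    exact hbc (mul_right_cancel₀ hLc (by simpa using hm))
  have nm0 : n + m ≠ 0 := by
    intro h
    have h' : (n : ℂ) + m = 0 := by exact_mod_cast h
    exact hac (mul_right_cancel₀ hLc
      (by linear_combination hn + hm + (2 * Real.pi * Complex.I) * h'))
  obtain ⟨k, l, hk, hl, hkl⟩ := int_form n m n0 m0 nm0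
  have key : (3 : ℂ) * (L : ℂ) ^ 2 = 4 * (Real.pi : ℂ) ^ 2 * ((n : ℂ) ^ 2 + n * m + (m : ℂ) ^ 2) := by
    obtain rfl : c = -a - b := by linear_combination e1
    have hA : (a - b) * L = n * (2 * Real.pi * Complex.I) := by linear_combination hn
    have hB : (b - (-a - b)) * L = m * (2 * Real.pi * Complex.I) := by linear_combination hm
    have t1 : ((a - b) * L) ^ 2 + ((a - b) * L) * ((b - (-a - b)) * L) +
        ((b - (-a - b)) * L) ^ 2 = -3 * (L : ℂ) ^ 2 := by
      linear_combination (-3 * (L : ℂ) ^ 2) * e2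
    rw [hA, hB] at t1
    linear_combination t1 -
      4 * (Real.pi : ℂ) ^ 2 * ((n : ℂ) ^ 2 + n * m + (m : ℂ) ^ 2) * Complex.I_sq
  have hklc : (k : ℝ) ^ 2 + k * l + (l : ℝ) ^ 2 = (n : ℝ) ^ 2 + n * m + (m : ℝ) ^ 2 := by
    exact_mod_cast hkl
  have keyR : (3 : ℝ) * L ^ 2 = 4 * Real.pi ^ 2 * ((k : ℝ) ^ 2 + k * l + (l : ℝ) ^ 2) := by
    rw [hklc]; exact_mod_cast key
  refine ⟨k, l, hk, hl, ?_⟩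
  have hp := Real.pi_pos
  have h3 : (0 : ℝ) < Real.sqrt 3 := by positivity
  rw [← sq_eq_sq₀ hL.le (by positivity), mul_pow, div_pow, Real.sq_sqrt (by positivity),
    Real.sq_sqrt (by positivity)]
  linarith

lemma memR_of_exp {L : ℝ} (hL : 0 < L) {a b : ℂ} (e : a ^ 2 + a * b + b ^ 2 + 1 = 0)
    (hab : a ≠ b) (h1 : Complex.exp (a * L) = Complex.I)
    (h2 : Complex.exp (b * L) = Complex.I) : L ∈ criticalR := by
  have hI : Complex.I = Complex.exp (Real.pi / 2 * Complex.I) := by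
    rw [Complex.exp_pi_div_two_mul_I]
  rw [hI] at h1 h2
  obtain ⟨k, hk⟩ := Complex.exp_eq_exp_iff_exists_int.1 h1
  obtain ⟨l, hl⟩ := Complex.exp_eq_exp_iff_exists_int.1 h2
  have hLc : (L : ℂ) ≠ 0 := by exact_mod_cast hL.ne'
  refine ⟨k, l, ?_, ?_⟩
  · rintro rfl
    exact hab (mul_right_cancel₀ hLc (hk.trans hl.symm))
  have key : (L : ℂ) ^ 2 = (Real.pi : ℂ) ^ 2 * ((1/2 + 2*(k : ℂ))^2 + (1/2 + 2*(l : ℂ))^2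
      + (1/2 + 2*(k : ℂ)) * (1/2 + 2*(l : ℂ))) := by
    have t : (a * L) ^ 2 + (a * L) * (b * L) + (b * L) ^ 2 = - (L : ℂ) ^ 2 := by
      linear_combination (L : ℂ) ^ 2 * e
    rw [hk, hl] at t
    linear_combination t - (Real.pi : ℂ) ^ 2 * ((1/2 + 2*(k : ℂ))^2 + (1/2 + 2*(l : ℂ))^2
      + (1/2 + 2*(k : ℂ)) * (1/2 + 2*(l : ℂ))) * Complex.I_sq
  have keyR : L ^ 2 = Real.pi ^ 2 * ((1/2 + 2*(k : ℝ))^2 + (1/2 + 2*(l : ℝ))^2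
      + (1/2 + 2*(k : ℝ)) * (1/2 + 2*(l : ℝ))) := by
    apply Complex.ofReal_injective
    push_cast
    exact key
  have hp := Real.pi_pos
  have hpos : 0 ≤ (1/2 + 2*(k : ℝ))^2 + (1/2 + 2*(l : ℝ))^2
      + (1/2 + 2*(k : ℝ)) * (1/2 + 2*(l : ℝ)) := by
    nlinarith [sq_nonneg ((1/2 + 2*(k : ℝ)) + (1/2 + 2*(l : ℝ))), sq_nonneg (1/2 + 2*(k : ℝ)),
      sq_nonneg (1/2 + 2*(l : ℝ))]
  rw [← sq_eq_sq₀ hL.le (by positivity), mul_pow, Real.sq_sqrt hpos]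
  exact keyR

lemma memR_of_exp' {L : ℝ} (hL : 0 < L) {a b ε : ℂ} (hε : ε = Complex.I ∨ ε = -Complex.I)
    (e : a ^ 2 + a * b + b ^ 2 + 1 = 0)
    (hab : a ≠ b) (h1 : Complex.exp (a * L) = ε)
    (h2 : Complex.exp (b * L) = ε) : L ∈ criticalR := by
  rcases hε with rfl | rfl
  · exact memR_of_exp hL e hab h1 h2
  · refine memR_of_exp hL (a := -a) (b := -b) (by linear_combination e)
      (fun h => hab (neg_injective h)) ?_ ?_
    · rw [neg_mul, Complex.exp_neg, h1, inv_neg, Complex.inv_I, neg_neg]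
    · rw [neg_mul, Complex.exp_neg, h2, inv_neg, Complex.inv_I, neg_neg]

lemma IsSol.memN {lam : ℂ} {L : ℝ} (hL : 0 < L) {y y1 y2 : ℝ → ℂ} (h : IsSol lam L y y1 y2)
    (h0 : y 0 = 0) (hL0 : y L = 0) (h1 : y1 0 = 0) (hL1 : y1 L = 0)
    (hne : ¬ ∀ x ∈ Icc (0 : ℝ) L, y x = 0) : L ∈ criticalN := by
  have h2 : y2 0 ≠ 0 := fun h2 => hne (h.eq_zero h0 h1 h2)
  obtain ⟨a, b, c, e1, e2, e3⟩ := exists_roots lam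
  obtain rfl : c = -a - b := by linear_combination e1
  have ra : a ^ 3 + a + lam = 0 := by linear_combination e3 - a * e2
  have rb : b ^ 3 + b + lam = 0 := by linear_combination e3 - b * e2
  have rc : (-a - b) ^ 3 + (-a - b) + lam = 0 := by linear_combination e3 - (-a - b) * e2
  have hLc : (L : ℂ) ≠ 0 := by exact_mod_cast hL.ne'
  have nd : ∀ s : ℂ, s ^ 3 + s + lam = 0 → 3 * s ^ 2 + 1 ≠ 0 := by
    intro s hs hd
    have k1 := h.root hL h0 hL0 hs
    have k2 := h.dbl hL h0 hL0 hs hd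
    simp only [h1, hL1, mul_zero, add_zero, zero_mul, zero_sub] at k1 k2
    have k3 : y2 L = 0 := by
      have : (L : ℂ) * y2 L = 0 := by linear_combination k2
      simpa [hLc] using this
    rw [k3] at k1
    simp [h2, Complex.exp_ne_zero] at k1
  have ea := h.root hL h0 hL0 ra
  have eb := h.root hL h0 hL0 rb
  have ec := h.root hL h0 hL0 rc
  simp only [h1, hL1, mul_zero, add_zero] at ea eb ec
  refine memN_of_exp hL e1 e2 ?_ ?_ ?_ (mul_left_cancel₀ h2 (ea.trans eb.symm))
    (mul_left_cancel₀ h2 (eb.trans ec.symm))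
  · rintro rfl
    exact nd a ra (by linear_combination (-e2))
  · intro hbc
    obtain rfl : a = -2 * b := by linear_combination hbc
    exact nd b rb (by linear_combination (-e2))
  · intro hbc
    obtain rfl : b = -2 * a := by linear_combination hbc
    exact nd a ra (by linear_combination (-e2))

lemma IsSol.memR {lam ε : ℂ} {L : ℝ} (hL : 0 < L) {y y1 y2 : ℝ → ℂ} (h : IsSol lam L y y1 y2)
    (hε : ε = Complex.I ∨ ε = -Complex.I)
    (h0 : y 0 = 0) (hL0 : y L = 0) (h1 : y1 0 ≠ 0) (hL1 : y1 L = ε * y1 0)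
    (hL2 : y2 L = ε * y2 0) : L ∈ criticalR := by
  have hε0 : ε ≠ 0 := by rcases hε with rfl | rfl <;> simp
  obtain ⟨a, b, c, e1, e2, e3⟩ := exists_roots lam
  obtain rfl : c = -a - b := by linear_combination e1
  have ra : a ^ 3 + a + lam = 0 := by linear_combination e3 - a * e2
  have rb : b ^ 3 + b + lam = 0 := by linear_combination e3 - b * e2
  have rc : (-a - b) ^ 3 + (-a - b) + lam = 0 := by linear_combination e3 - (-a - b) * e2
  have hLc : (L : ℂ) ≠ 0 := by exact_mod_cast hL.ne'
  have good : ∀ s : ℂ, s ^ 3 + s + lam = 0 → y2 0 + s * y1 0 ≠ 0 → Complex.exp (s * L) = ε := by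
    intro s hs hr
    have k1 := h.root hL h0 hL0 hs
    rw [hL1, hL2] at k1
    exact mul_left_cancel₀ hr (by linear_combination k1)
  have uniq : ∀ s t : ℂ, s ≠ t → y2 0 + s * y1 0 = 0 → y2 0 + t * y1 0 ≠ 0 := by
    intro s t hst hs ht
    exact hst (mul_right_cancel₀ h1 (by linear_combination hs - ht))
  have dbl : ∀ s : ℂ, s ^ 3 + s + lam = 0 → (-2 * s) ^ 3 + (-2 * s) + lam = 0 →
      3 * s ^ 2 + 1 = 0 → L ∈ criticalR := by
    intro s hs ht hd
    have hst : s ≠ -2 * s := by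
      intro hh
      have : s = 0 := by linear_combination hh / 3
      rw [this] at hd
      norm_num at hd
    have k2 := h.dbl hL h0 hL0 hs hd
    rw [hL1, hL2] at k2
    have hs0 : y2 0 + s * y1 0 = 0 := by
      by_contra hr
      rw [good s hs hr] at k2
      have : (L : ℂ) * ε * (y2 0 + s * y1 0) = 0 := by linear_combination k2
      exact mul_ne_zero (mul_ne_zero hLc hε0) hr this
    have hes : Complex.exp (s * L) = ε :=
      mul_left_cancel₀ h1 (by linear_combination k2 - (L : ℂ) * ε * hs0)
    exact memR_of_exp' hL hε (a := s) (b := -2 * s) (by linear_combination hd) hst hes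
      (good _ ht (uniq _ _ hst hs0))
  by_cases hab : a = b
  · subst hab
    exact dbl a ra (by convert rc using 3 <;> ring) (by linear_combination (-e2))
  by_cases hbc : b = -a - b
  · obtain rfl : a = -2 * b := by linear_combination hbc
    exact dbl b rb ra (by linear_combination (-e2))
  by_cases hac : a = -a - b
  · obtain rfl : b = -2 * a := by linear_combination hac
    exact dbl a ra rb (by linear_combination (-e2))
  by_cases za : y2 0 + a * y1 0 = 0
  · exact memR_of_exp' hL hε (by linear_combination (-e2)) hbc (good _ rb (uniq _ _ hab za))
      (good _ rc (uniq _ _ hac za))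
  by_cases zb : y2 0 + b * y1 0 = 0
  · exact memR_of_exp' hL hε (by linear_combination (-e2)) hac (good _ ra za)
      (good _ rc (uniq _ _ hbc zb))
  · exact memR_of_exp' hL hε (by linear_combination (-e2)) hab (good _ ra za) (good _ rb zb)

lemma pairing {lam : ℂ} {L : ℝ} (hL : 0 < L) {p p1 p2 q q1 q2 : ℝ → ℂ}
    (hp : IsSol lam L p p1 p2) (hq : IsSol lam L q q1 q2)
    (hp0 : p 0 = 0) (hpL : p L = 0) (hq0 : q 0 = 0) (hqL : q L = 0) :
    q1 0 * p1 L = q1 L * p1 0 := by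
  have key := const_of_deriv_zero (L := L)
    (fun x => q (L - x) * p2 x + q1 (L - x) * p1 x + q2 (L - x) * p x + q (L - x) * p x) (by
      intro x hx
      obtain ⟨a, b, c⟩ := hp x hx
      obtain ⟨a', b', c'⟩ := hq (L - x) ⟨by linarith [hx.2], by linarith [hx.1]⟩
      have A := a'.comp_const_sub L x
      have B := b'.comp_const_sub L x
      have C := c'.comp_const_sub L x
      refine HasDerivAt.congr_deriv ((((A.mul c).add (B.mul b)).add (C.mul a)).add (A.mul a)) (Eq.symm ?_)
      ring) L ⟨hL.le, le_rfl⟩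
  simpa [hp0, hpL, hq0, hqL] using key

lemma forward_aux {lam : ℂ} {L : ℝ} (hL : 0 < L) {p p1 p2 q q1 q2 : ℝ → ℂ}
    (hp : IsSol lam L p p1 p2) (hq : IsSol lam L q q1 q2)
    (hp0 : p 0 = 0) (hpL : p L = 0) (hq0 : q 0 = 0) (hqL : q L = 0)
    (hp1 : p1 L = Complex.I * p1 0) (hq1 : q1 L = -Complex.I * q1 0)
    (hpq : (p2 L - Complex.I * p2 0) + (q2 L + Complex.I * q2 0) = 0)
    (hne : ¬ ∀ x ∈ Icc (0 : ℝ) L, p x = 0 ∧ q x = 0) : L ∈ criticalN ∪ criticalR := by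
  have hpr := pairing hL hp hq hp0 hpL hq0 hqL
  rw [hp1, hq1] at hpr
  have hz : p1 0 = 0 ∨ q1 0 = 0 := by
    have : 2 * Complex.I * (p1 0 * q1 0) = 0 := by linear_combination hpr
    simpa using this
  -- second derivative vanishes at the ends for the zero solution
  have zz : ∀ (y y1 y2 : ℝ → ℂ), IsSol lam L y y1 y2 → (∀ x ∈ Icc (0 : ℝ) L, y x = 0) →
      y1 0 = 0 → y1 L = 0 → y2 0 = 0 ∧ y2 L = 0 := by
    intro y y1 y2 hy hy0 h10 h1L
    have u := uniqueDiffOn_Icc hL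
    have d1 : ∀ x ∈ Icc (0 : ℝ) L, y1 x = 0 := fun x hx =>
      (u x hx).eq_deriv _ (hy x hx).1.hasDerivWithinAt
        ((hasDerivWithinAt_const x (Icc 0 L) (0 : ℂ)).congr hy0 (hy0 x hx))
    have d2 : ∀ x ∈ Icc (0 : ℝ) L, y2 x = 0 := fun x hx =>
      (u x hx).eq_deriv _ (hy x hx).2.1.hasDerivWithinAt
        ((hasDerivWithinAt_const x (Icc 0 L) (0 : ℂ)).congr d1 (d1 x hx))
    exact ⟨d2 0 ⟨le_rfl, hL.le⟩, d2 L ⟨hL.le, le_rfl⟩⟩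
  rcases hz with hz | hz
  · have hzL : p1 L = 0 := by rw [hp1, hz, mul_zero]
    by_cases hpz : ∀ x ∈ Icc (0 : ℝ) L, p x = 0
    · obtain ⟨z1, z2⟩ := zz p p1 p2 hp hpz hz hzL
      have hqn : ¬ ∀ x ∈ Icc (0 : ℝ) L, q x = 0 := fun hh => hne fun x hx => ⟨hpz x hx, hh x hx⟩
      by_cases hq10 : q1 0 = 0
      · exact Or.inl (hq.memN hL hq0 hqL hq10 (by rw [hq1, hq10, mul_zero]) hqn)
      · refine Or.inr (hq.memR hL (Or.inr rfl) hq0 hqL hq10 hq1 ?_)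
        rw [z1, z2] at hpq
        linear_combination hpq
    · exact Or.inl (hp.memN hL hp0 hpL hz hzL hpz)
  · have hzL : q1 L = 0 := by rw [hq1, hz, mul_zero]
    by_cases hqz : ∀ x ∈ Icc (0 : ℝ) L, q x = 0
    · obtain ⟨z1, z2⟩ := zz q q1 q2 hq hqz hz hzL
      have hpn : ¬ ∀ x ∈ Icc (0 : ℝ) L, p x = 0 := fun hh => hne fun x hx => ⟨hh x hx, hqz x hx⟩
      by_cases hp10 : p1 0 = 0
      · exact Or.inl (hp.memN hL hp0 hpL hp10 (by rw [hp1, hp10, mul_zero]) hpn)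
      · refine Or.inr (hp.memR hL (Or.inl rfl) hp0 hpL hp10 hp1 ?_)
        rw [z1, z2] at hpq
        linear_combination hpq
    · exact Or.inl (hq.memN hL hq0 hqL hz hzL hqz)

lemma forward (L : ℝ) (hL : 0 < L) (lam : ℂ) (θ u : ℝ → ℂ)
    (cθ : ContDiff ℝ 3 θ) (cu : ContDiff ℝ 3 u)
    (hne : ¬(∀ x ∈ Icc (0 : ℝ) L, θ x = 0 ∧ u x = 0))
    (o1 : ∀ x ∈ Icc (0 : ℝ) L, -deriv u x - deriv (deriv (deriv u)) x = lam * θ x)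
    (o2 : ∀ x ∈ Icc (0 : ℝ) L, -deriv θ x - deriv (deriv (deriv θ)) x = lam * u x)
    (b1 : θ 0 = 0) (b2 : θ L = 0) (b3 : deriv θ 0 = 0) (b4 : deriv (deriv θ) L = 0)
    (b5 : u 0 = 0) (b6 : u L = 0) (b7 : deriv u L = 0) : L ∈ criticalN ∪ criticalR := by
  have smooth : ∀ f : ℝ → ℂ, ContDiff ℝ 3 f → ∀ x, HasDerivAt f (deriv f x) x ∧
      HasDerivAt (deriv f) (deriv (deriv f) x) x ∧
      HasDerivAt (deriv (deriv f)) (deriv (deriv (deriv f)) x) x := by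
    intro f hf x
    have h3 : ContDiff ℝ (2 + 1) f := by
      rw [show (2 + 1 : WithTop ℕ∞) = 3 by norm_num]; exact hf
    have h2 : ContDiff ℝ (1 + 1) (deriv f) := by
      rw [show (1 + 1 : WithTop ℕ∞) = 2 by norm_num]
      exact (contDiff_succ_iff_deriv.1 h3).2.2
    have h1 : ContDiff ℝ 1 (deriv (deriv f)) := (contDiff_succ_iff_deriv.1 h2).2.2
    exact ⟨(h3.differentiable (by norm_num) x).hasDerivAt,
      (h2.differentiable (by norm_num) x).hasDerivAt,
      (h1.differentiable (by norm_num) x).hasDerivAt⟩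
  have sθ := smooth θ cθ
  have su := smooth u cu
  have gen : ∀ ε : ℂ, IsSol lam L
      (fun x => (θ x + u x) + ε * (θ (L - x) - u (L - x)))
      (fun x => (deriv θ x + deriv u x) + ε * (-deriv θ (L - x) - -deriv u (L - x)))
      (fun x => (deriv (deriv θ) x + deriv (deriv u) x) +
        ε * (deriv (deriv θ) (L - x) - deriv (deriv u) (L - x))) := by
    intro ε x hx
    have hx' : L - x ∈ Icc (0 : ℝ) L := ⟨by linarith [hx.2], by linarith [hx.1]⟩
    obtain ⟨a, b, c⟩ := sθ x
    obtain ⟨a', b', c'⟩ := su x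
    obtain ⟨A, B, C⟩ := sθ (L - x)
    obtain ⟨A', B', C'⟩ := su (L - x)
    refine ⟨?_, ?_, ?_⟩
    · exact (a.add a').add (((A.comp_const_sub L x).sub (A'.comp_const_sub L x)).const_mul ε)
    · refine HasDerivAt.congr_deriv ((b.add b').add
        (((B.comp_const_sub L x).neg.sub (B'.comp_const_sub L x).neg).const_mul ε)) (Eq.symm ?_)
      ring
    · refine HasDerivAt.congr_deriv ((c.add c').add
        (((C.comp_const_sub L x).sub (C'.comp_const_sub L x)).const_mul ε)) (Eq.symm ?_)
      linear_combination o1 x hx + o2 x hx + ε * o1 (L - x) hx' - ε * o2 (L - x) hx'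
  refine forward_aux hL (gen Complex.I) (gen (-Complex.I)) ?_ ?_ ?_ ?_ ?_ ?_ ?_ ?_
  · simp [b1, b2, b5, b6]
  · simp [b1, b2, b5, b6]
  · simp [b1, b2, b5, b6]
  · simp [b1, b2, b5, b6]
  · simp only [sub_zero, sub_self, b3, b7]
    linear_combination deriv θ L * Complex.I_sq
  · simp only [sub_zero, sub_self, b3, b7]
    linear_combination deriv θ L * Complex.I_sq
  · simp only [sub_zero, sub_self, b4]
    linear_combination 2 * deriv (deriv u) L * Complex.I_sq
  · intro hh
    apply hne
    intro x hx
    have hx' : L - x ∈ Icc (0 : ℝ) L := ⟨by linarith [hx.2], by linarith [hx.1]⟩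
    obtain ⟨k1, k2⟩ := hh x hx
    obtain ⟨k3, k4⟩ := hh (L - x) hx'
    simp only [sub_sub_cancel] at k3 k4
    have v : θ x + u x = 0 := by linear_combination (k1 + k2) / 2
    have w : θ x - u x = 0 := by
      have : 2 * Complex.I * (θ x - u x) = 0 := by linear_combination k3 - k4
      simpa using this
    exact ⟨by linear_combination (v + w) / 2, by linear_combination (v - w) / 2⟩

/-- Sums of exponentials. -/
noncomputable def TS (c d s : Fin 3 → ℂ) (x : ℝ) : ℂ :=
  ∑ j, (c j * Complex.exp (s j * x) + d j * Complex.exp (-s j * x))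

lemma TS_hasDerivAt (c d s : Fin 3 → ℂ) (x : ℝ) :
    HasDerivAt (TS c d s) (TS (fun j => c j * s j) (fun j => - d j * s j) s x) x := by
  unfold TS
  apply HasDerivAt.fun_sum
  intro j _
  refine HasDerivAt.congr_deriv (((hasDerivAt_cexp (s j) x).const_mul (c j)).add
    ((hasDerivAt_cexp (-s j) x).const_mul (d j))) (Eq.symm ?_)
  ring

lemma TS_deriv (c d s : Fin 3 → ℂ) :
    deriv (TS c d s) = TS (fun j => c j * s j) (fun j => - d j * s j) s :=
  funext fun x => (TS_hasDerivAt c d s x).deriv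

lemma TS_contDiff (c d s : Fin 3 → ℂ) : ContDiff ℝ 3 (TS c d s) := by
  unfold TS
  have : ContDiff ℝ 3 (fun x : ℝ => (x : ℂ)) := Complex.ofRealCLM.contDiff
  fun_prop

lemma backward_aux (L : ℝ) (hL : 0 < L) (lam : ℂ) (c d s μ : Fin 3 → ℂ)
    (hs : ∀ j, s j ^ 3 + s j + lam = 0)
    (hμ : ∀ j, Complex.exp (s j * L) = μ j) 
    (c0 : ∑ j, c j = 0) (d0 : ∑ j, d j = 0) (cL : ∑ j, c j * μ j = 0)
    (dL : ∑ j, d j * (μ j)⁻¹ = 0) (h1 : ∑ j, (c j - d j) * s j = 0)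
    (h2 : ∑ j, (c j * μ j + d j * (μ j)⁻¹) * s j ^ 2 = 0)
    (h3 : ∑ j, (c j * μ j + d j * (μ j)⁻¹) * s j = 0)
    (hne : ¬ (∑ j, c j * s j = 0 ∧ ∑ j, c j * s j ^ 2 = 0)) :
    (∃ (lam : ℂ) (θ u : ℝ → ℂ),
      ContDiff ℝ 3 θ ∧ ContDiff ℝ 3 u ∧
      ¬(∀ x ∈ Icc (0 : ℝ) L, θ x = 0 ∧ u x = 0) ∧
      (∀ x ∈ Icc (0 : ℝ) L, -deriv u x - deriv (deriv (deriv u)) x = lam * θ x) ∧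
      (∀ x ∈ Icc (0 : ℝ) L, -deriv θ x - deriv (deriv (deriv θ)) x = lam * u x) ∧
      θ 0 = 0 ∧ θ L = 0 ∧ deriv θ 0 = 0 ∧ deriv (deriv θ) L = 0 ∧
      u 0 = 0 ∧ u L = 0 ∧ deriv u L = 0) := by
  have hμ' : ∀ j, Complex.exp (-(s j * L)) = (μ j)⁻¹ := by
    intro j; rw [Complex.exp_neg, hμ]
  refine ⟨lam, TS c d s, TS c (fun j => -d j) s, TS_contDiff _ _ _, TS_contDiff _ _ _, ?_, ?_, ?_,
    ?_, ?_, ?_, ?_, ?_, ?_, ?_⟩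
  · intro hz
    have un := uniqueDiffOn_Icc hL
    have step : ∀ c s : Fin 3 → ℂ, (∀ x ∈ Icc (0 : ℝ) L, TS c 0 s x = 0) →
        ∀ x ∈ Icc (0 : ℝ) L, TS (fun j => c j * s j) 0 s x = 0 := by
      intro c s h x hx
      have h1 := (TS_hasDerivAt c 0 s x).hasDerivWithinAt (s := Icc 0 L)
      have := (un x hx).eq_deriv _ h1
        ((hasDerivWithinAt_const x (Icc 0 L) (0 : ℂ)).congr h (h x hx))
      rw [← this]
      simp [TS]
    have z0 : ∀ x ∈ Icc (0 : ℝ) L, TS c 0 s x = 0 := by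
      intro x hx
      obtain ⟨k1, k2⟩ := hz x hx
      simp only [TS, Fin.sum_univ_three, Pi.zero_apply] at k1 k2 ⊢
      linear_combination (k1 + k2) / 2
    have z1 := step _ _ z0
    have z2 := step _ _ z1
    have m0 : (0 : ℝ) ∈ Icc (0 : ℝ) L := ⟨le_rfl, hL.le⟩
    apply hne
    constructor
    · simpa [TS] using z1 0 m0
    · simpa [TS, mul_assoc, sq] using z2 0 m0
  · intro x _
    simp only [TS_deriv]
    simp only [TS, Finset.mul_sum, ← Finset.sum_neg_distrib, ← Finset.sum_sub_distrib]
    refine Finset.sum_congr rfl fun j _ => ?_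
    linear_combination (-c j * Complex.exp (s j * x) - d j * Complex.exp (-s j * x)) * hs j
  · intro x _
    simp only [TS_deriv]
    simp only [TS, Finset.mul_sum, ← Finset.sum_neg_distrib, ← Finset.sum_sub_distrib]
    refine Finset.sum_congr rfl fun j _ => ?_
    linear_combination (-c j * Complex.exp (s j * x) + d j * Complex.exp (-s j * x)) * hs j
  all_goals
    try simp only [TS_deriv]
    simp only [TS, neg_mul, hμ, hμ', Complex.ofReal_zero, mul_zero, neg_zero, Complex.exp_zero]
    simp only [Fin.sum_univ_three] at *
  · linear_combination c0 + d0
  · linear_combination cL + dL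
  · linear_combination h1
  · linear_combination h2
  · linear_combination c0 - d0
  · linear_combination cL - dL
  · linear_combination h3

theorem statement_6 (L : ℝ) (hL : 0 < L) :
    (∃ (lam : ℂ) (θ u : ℝ → ℂ),
      ContDiff ℝ 3 θ ∧ ContDiff ℝ 3 u ∧
      ¬(∀ x ∈ Icc (0 : ℝ) L, θ x = 0 ∧ u x = 0) ∧
      (∀ x ∈ Icc (0 : ℝ) L, -deriv u x - deriv (deriv (deriv u)) x = lam * θ x) ∧
      (∀ x ∈ Icc (0 : ℝ) L, -deriv θ x - deriv (deriv (deriv θ)) x = lam * u x) ∧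
      θ 0 = 0 ∧ θ L = 0 ∧ deriv θ 0 = 0 ∧ deriv (deriv θ) L = 0 ∧
      u 0 = 0 ∧ u L = 0 ∧ deriv u L = 0) ↔ L ∈ criticalN ∪ criticalR := by
  have hLc : (L : ℂ) ≠ 0 := by exact_mod_cast hL.ne'
  have hpc : (Real.pi : ℂ) ≠ 0 := by exact_mod_cast Real.pi_ne_zero
  have hI := Complex.I_sq
  constructor
  · rintro ⟨lam, θ, u, c1, c2, hne, o1, o2, b1, b2, b3, b4, b5, b6, b7⟩
    exact forward L hL lam θ u c1 c2 hne o1 o2 b1 b2 b3 b4 b5 b6 b7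
  · rintro (⟨k, l, hk, hl, hkl⟩ | ⟨k, l, hkl0, hkl⟩)
    · have hk0 : (k : ℂ) ≠ 0 := by exact_mod_cast hk.ne'
      have hl0 : (l : ℂ) ≠ 0 := by exact_mod_cast hl.ne'
      have hkl0 : (k : ℂ) + l ≠ 0 := by exact_mod_cast (by omega : k + l ≠ 0)
      have keyR : (3 : ℝ) * L ^ 2 = 4 * Real.pi ^ 2 * ((k : ℝ) ^ 2 + k * l + (l : ℝ) ^ 2) := by
        rw [hkl, mul_pow, div_pow, Real.sq_sqrt (by positivity), Real.sq_sqrt (by positivity)]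
        ring
      have key : (3 : ℂ) * (L : ℂ) ^ 2 =
          4 * (Real.pi : ℂ) ^ 2 * ((k : ℂ) ^ 2 + k * l + (l : ℂ) ^ 2) := by exact_mod_cast keyR
      obtain ⟨r, hr⟩ : ∃ r : ℂ, r * L = 2 * Real.pi * Complex.I / 3 :=
        ⟨2 * Real.pi * Complex.I / 3 / L, by field_simp⟩
      have hr0 : r ≠ 0 := by
        rintro rfl
        rw [zero_mul] at hr
        have : (Real.pi : ℂ) * Complex.I = 0 := by linear_combination (-3 / 2) * hr
        simp [hpc] at this
      have hr2 : 3 * r ^ 2 * ((k : ℂ) ^ 2 + k * l + (l : ℂ) ^ 2) = -1 := by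
        have : (L : ℂ) ^ 2 * (3 * r ^ 2 * ((k : ℂ) ^ 2 + k * l + (l : ℂ) ^ 2) + 1) = 0 := by
          have e : (r * L) ^ 2 = - (4 * Real.pi ^ 2 / 9) := by
            rw [hr]; linear_combination (4 * (Real.pi : ℂ) ^ 2 / 9) * hI
          linear_combination (3 * ((k : ℂ) ^ 2 + k * l + (l : ℂ) ^ 2)) * e + key / 3
        have := (mul_eq_zero.1 this).resolve_left (pow_ne_zero 2 hLc)
        linear_combination this
      set s : Fin 3 → ℂ := ![r * (2 * k + l), r * (l - k), -r * (k + 2 * l)] with hsd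
      set c : Fin 3 → ℂ := ![s 1 - s 2, s 2 - s 0, s 0 - s 1] with hcd
      set m := Complex.exp (s 0 * L) with hm
      have hm0 : m ≠ 0 := Complex.exp_ne_zero _
      have hs0 : s 0 = r * (2 * k + l) := rfl
      have hs1 : s 1 = r * (l - k) := rfl
      have hs2 : s 2 = -r * (k + 2 * l) := rfl
      have hc0 : c 0 = s 1 - s 2 := rfl
      have hc1 : c 1 = s 2 - s 0 := rfl
      have hc2 : c 2 = s 0 - s 1 := rfl
      have hμ : ∀ j, Complex.exp (s j * L) = m := by
        intro j
        fin_cases j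
        · rfl
        · refine Complex.exp_eq_exp_iff_exists_int.2 ⟨-k, ?_⟩
          change s 1 * L = s 0 * L + _
          rw [hs0, hs1]; push_cast
          linear_combination (-3 * (k : ℂ)) * hr
        · refine Complex.exp_eq_exp_iff_exists_int.2 ⟨-k - l, ?_⟩
          change s 2 * L = s 0 * L + _
          rw [hs0, hs2]; push_cast
          linear_combination (-3 * (k + l : ℂ)) * hr
      clear_value s c m
      refine backward_aux L hL (-(s 0 ^ 3 + s 0)) c (fun j => - m ^ 2 * c j) s (fun _ => m)
        ?_ hμ ?_ ?_ ?_ ?_ ?_ ?_ ?_ ?_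
      · intro j
        fin_cases j
        · change s 0 ^ 3 + s 0 + -(s 0 ^ 3 + s 0) = 0
          ring
        · change s 1 ^ 3 + s 1 + -(s 0 ^ 3 + s 0) = 0
          rw [hs0, hs1]
          linear_combination (-3 * r * k) * hr2
        · change s 2 ^ 3 + s 2 + -(s 0 ^ 3 + s 0) = 0
          rw [hs0, hs2]
          linear_combination (-3 * r * (k + l)) * hr2
      · simp only [Fin.sum_univ_three, hc0, hc1, hc2]; ring
      · simp only [Fin.sum_univ_three, hc0, hc1, hc2]; ring
      · simp only [Fin.sum_univ_three, hc0, hc1, hc2]; ring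
      · simp only [Fin.sum_univ_three, hc0, hc1, hc2]; ring
      · simp only [Fin.sum_univ_three, hc0, hc1, hc2]; ring
      · simp only [Fin.sum_univ_three, hc0, hc1, hc2]; field_simp; ring
      · simp only [Fin.sum_univ_three, hc0, hc1, hc2]; field_simp; ring
      · rintro ⟨-, h⟩
        simp only [Fin.sum_univ_three, hc0, hc1, hc2, hs0, hs1, hs2] at h
        have : 27 * r ^ 3 * (k * l * (k + l)) = 0 := by linear_combination h
        simp [hr0, hk0, hl0, hkl0] at this
    · have hpos : 0 ≤ (1/2 + 2*(k : ℝ))^2 + (1/2 + 2*(l : ℝ))^2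
          + (1/2 + 2*(k : ℝ)) * (1/2 + 2*(l : ℝ)) := by
        nlinarith [sq_nonneg ((1/2 + 2*(k : ℝ)) + (1/2 + 2*(l : ℝ))),
          sq_nonneg (1/2 + 2*(k : ℝ)), sq_nonneg (1/2 + 2*(l : ℝ))]
      have keyR : L ^ 2 = Real.pi ^ 2 * ((1/2 + 2*(k : ℝ))^2 + (1/2 + 2*(l : ℝ))^2
          + (1/2 + 2*(k : ℝ)) * (1/2 + 2*(l : ℝ))) := by
        rw [hkl, mul_pow, Real.sq_sqrt hpos]
      have key : (L : ℂ) ^ 2 = (Real.pi : ℂ) ^ 2 * ((1/2 + 2*(k : ℂ))^2 + (1/2 + 2*(l : ℂ))^2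
          + (1/2 + 2*(k : ℂ)) * (1/2 + 2*(l : ℂ))) := by
        have := congrArg (fun x : ℝ => (x : ℂ)) keyR
        push_cast at this
        exact this
      obtain ⟨a, ha⟩ : ∃ a : ℂ, a * L = Real.pi / 2 * Complex.I + k * (2 * Real.pi * Complex.I) :=
        ⟨(Real.pi / 2 * Complex.I + k * (2 * Real.pi * Complex.I)) / L, by field_simp⟩
      obtain ⟨b, hb⟩ : ∃ b : ℂ, b * L = Real.pi / 2 * Complex.I + l * (2 * Real.pi * Complex.I) :=
        ⟨(Real.pi / 2 * Complex.I + l * (2 * Real.pi * Complex.I)) / L, by field_simp⟩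
      have ea : Complex.exp (a * L) = Complex.I := by
        rw [← Complex.exp_pi_div_two_mul_I]
        exact Complex.exp_eq_exp_iff_exists_int.2 ⟨k, ha⟩
      have eb : Complex.exp (b * L) = Complex.I := by
        rw [← Complex.exp_pi_div_two_mul_I]
        exact Complex.exp_eq_exp_iff_exists_int.2 ⟨l, hb⟩
      have hab : a - b ≠ 0 := by
        intro h
        have : ((k : ℂ) - l) * (2 * Real.pi * Complex.I) = 0 := by
          linear_combination hb - ha + L * h
        simp only [mul_eq_zero, hpc, Complex.I_ne_zero, sub_eq_zero, or_false,
          OfNat.ofNat_ne_zero] at this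
        exact hkl0 (by exact_mod_cast this)
      have e : a ^ 2 + a * b + b ^ 2 + 1 = 0 := by
        have : (L : ℂ) ^ 2 * (a ^ 2 + a * b + b ^ 2 + 1) = 0 := by
          have t : (L : ℂ) ^ 2 * (a ^ 2 + a * b + b ^ 2 + 1) =
            (a * L) ^ 2 + (a * L) * (b * L) + (b * L) ^ 2 + (L : ℂ) ^ 2 := by ring
          rw [t, ha, hb, key]
          linear_combination (Real.pi : ℂ) ^ 2 * ((1/2 + 2*(k : ℂ))^2 + (1/2 + 2*(l : ℂ))^2
            + (1/2 + 2*(k : ℂ)) * (1/2 + 2*(l : ℂ))) * hI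
        exact (mul_eq_zero.1 this).resolve_left (pow_ne_zero 2 hLc)
      refine backward_aux L hL (-(a ^ 3 + a)) ![1, -1, 0] ![1, -1, 0] ![a, b, a]
        ![Complex.I, Complex.I, Complex.I] ?_ ?_ ?_ ?_ ?_ ?_ ?_ ?_ ?_ ?_
      · intro j
        fin_cases j
        · change a ^ 3 + a + -(a ^ 3 + a) = 0
          ring
        · change b ^ 3 + b + -(a ^ 3 + a) = 0
          linear_combination (b - a) * e
        · change a ^ 3 + a + -(a ^ 3 + a) = 0
          ring
      · intro j
        fin_cases j
        · exact ea
        · exact eb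
        · exact ea
      · simp [Fin.sum_univ_three]
      · simp [Fin.sum_univ_three]
      · simp [Fin.sum_univ_three]
      · simp [Fin.sum_univ_three]
      · simp [Fin.sum_univ_three]
      · simp [Fin.sum_univ_three]
      · simp [Fin.sum_univ_three]
      · rintro ⟨h, -⟩
        simp [Fin.sum_univ_three] at h
        exact hab (by linear_combination h)
end
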